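/- Let f be a multicritical circle map with irrational rotation number and chosen critical point c_0; write Δ_k = f^{q_n + k q_{n+1}}(I_{n+1}(c_0)) for 0 ≤ k < a_{n+1}, let the critical times 0 ≤ k_1 < ⋯ < k_r < a_{n+1} (with k_0 = 0) be those k for which Δ_k contains a critical point of f^{q_{n+1}}, and for 0 ≤ i < r let G_i = ⋃_{k=k_i+1}^{k_{i+1}−1} Δ_k be the i-th bridge, with G_r = ⋃_{k=k_r+1}^{a_{n+1}−1} Δ_k. Then each non-empty bridge G_i is comparable to I_n(c_0): there is a constant K > 1 depending only on f such that K^{−1}|I_n(c_0)| ≤ |G_i| ≤ K|I_n(c_0)|. -/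

import Mathlib

open Set Filter MeasureTheory

noncomputable section

/-- The Schwarzian derivative `Sf = (f''/f')' - (1/2) (f''/f')^2`. -/
def schwarzianDeriv (f : ℝ → ℝ) (x : ℝ) : ℝ :=
  deriv (fun y => deriv (deriv f) y / deriv f y) x
    - (1 / 2) * (deriv (deriv f) x / deriv f x) ^ 2

/-- A multicritical circle map, described through its lift `F : ℝ → ℝ` to the real line.
It is an orientation-preserving `C^3` circle homeomorphism with finitely many critical
points `c 0, …, c (N-1)`, each of non-flat power-law type: near `c i` the derivative is
pinched between two multiples of `|x - c i| ^ (s i - 1)` with `s i > 1`, the Schwarzian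
derivative is negative on a punctured neighborhood of each critical point, and
`log (F')` has bounded variation (bounded by `v`) off the critical neighborhoods. -/
structure MCM where
  /-- the lift of the circle map -/
  F : ℝ → ℝ
  smooth : ContDiff ℝ 3 F
  mono : StrictMono F
  deg1 : ∀ x, F (x + 1) = F x + 1
  /-- number of critical points -/
  N : ℕ
  N_pos : 0 < N
  /-- the critical points (one representative in `[0,1)` for each) -/
  c : Fin N → ℝ
  c_mem : ∀ i, c i ∈ Set.Ico (0 : ℝ) 1
  c_inj : Function.Injective c
  isCrit : ∀ i, deriv F (c i) = 0
  critOnly : ∀ x, deriv F x = 0 → ∃ (i : Fin N) (k : ℤ), x = c i + (k : ℝ)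
  /-- neighborhoods of the critical points -/
  W : Fin N → Set ℝ
  W_open : ∀ i, IsOpen (W i)
  c_mem_W : ∀ i, c i ∈ W i
  /-- the criticalities (power-law exponents) -/
  s : Fin N → ℝ
  s_gt_one : ∀ i, 1 < s i
  al : Fin N → ℝ
  be : Fin N → ℝ
  al_pos : ∀ i, 0 < al i
  al_lt_be : ∀ i, al i < be i
  powerLaw : ∀ i, ∀ x ∈ W i, x ≠ c i →
    al i * |x - c i| ^ (s i - 1) < deriv F x ∧
      deriv F x < be i * |x - c i| ^ (s i - 1)
  negSchwarzian : ∀ i, ∀ x ∈ W i, x ≠ c i → schwarzianDeriv F x < 0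
  /-- bound for the variation of `log DF` off the critical neighborhoods -/
  v : ℝ
  v_pos : 0 < v
  logDF_var : eVariationOn (fun x => Real.log (deriv F x))
      (Set.Icc 0 1 \ ⋃ (i) (k : ℤ), (fun y => y + (k : ℝ)) '' W i) ≤ ENNReal.ofReal v

/-- The circle map with lift `F` has rotation number `ρ`. -/
def HasRotationNumber (F : ℝ → ℝ) (ρ : ℝ) : Prop :=
  Tendsto (fun n : ℕ => F^[n] 0 / n) atTop (nhds ρ)

/-- The Gauss map `x ↦ {1/x}`. -/
def gaussMap (x : ℝ) : ℝ := Int.fract x⁻¹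

/-- Partial quotients `a_n` of the continued fraction expansion of `ρ ∈ (0,1)`. -/
def cfDigit (ρ : ℝ) (n : ℕ) : ℕ := (⌊(gaussMap^[n] ρ)⁻¹⌋).toNat

/-- Return times: the denominators `q_n` of the convergents of `ρ`,
`q_0 = 1`, `q_1 = a_0`, `q_{n+1} = a_n q_n + q_{n-1}`. -/
def qDen (ρ : ℝ) : ℕ → ℕ
  | 0 => 1
  | 1 => cfDigit ρ 0
  | n + 2 => cfDigit ρ (n + 1) * qDen ρ (n + 1) + qDen ρ n

/-- Numerators `p_n` of the convergents of `ρ`: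
`p_0 = 0`, `p_1 = 1`, `p_{n+1} = a_n p_n + p_{n-1}`. -/
def pNum (ρ : ℝ) : ℕ → ℕ
  | 0 => 0
  | 1 => 1
  | n + 2 => cfDigit ρ (n + 1) * pNum ρ (n + 1) + pNum ρ n

/-- The lift of the atom `I_ℓ^j(x) = f^j(I_ℓ(x))`, where `I_ℓ(x)` is the interval with
endpoints `x` and `f^{q_ℓ}(x)`; the lift of `f^{q_ℓ}(x)` adjacent to `x` is
`F^[q_ℓ] x - p_ℓ`. -/
def atomSet (F : ℝ → ℝ) (ρ x : ℝ) (ℓ j : ℕ) : Set ℝ :=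
  Set.uIcc (F^[j] x) (F^[j + qDen ρ ℓ] x - (pNum ρ ℓ : ℝ))

/-- The length of the atom `I_ℓ^j(x)`. -/
def atomLen (F : ℝ → ℝ) (ρ x : ℝ) (ℓ j : ℕ) : ℝ :=
  |F^[j + qDen ρ ℓ] x - (pNum ρ ℓ : ℝ) - F^[j] x|

/-- The two endpoints (as lifts) of the atom `I_ℓ^j(x)`. -/
def atomEnds (F : ℝ → ℝ) (ρ x : ℝ) (ℓ j : ℕ) : Set ℝ :=
  {F^[j] x, F^[j + qDen ρ ℓ] x - (pNum ρ ℓ : ℝ)}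

/-- `(ℓ, j)` indexes an atom of the `n`-th dynamical partition
`P_n(x) = {I_n^i(x) : i < q_{n+1}} ∪ {I_{n+1}^j(x) : j < q_n}`. -/
def IsAtomIdx (ρ : ℝ) (n ℓ j : ℕ) : Prop :=
  (ℓ = n ∧ j < qDen ρ (n + 1)) ∨ (ℓ = n + 1 ∧ j < qDen ρ n)

/-- Two distinct atoms are adjacent when they share an endpoint on the circle,
i.e. when some endpoints of their lifts differ by an integer. -/
def AdjacentAtoms (F : ℝ → ℝ) (ρ x : ℝ) (ℓ₁ j₁ ℓ₂ j₂ : ℕ) : Prop :=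
  (ℓ₁, j₁) ≠ (ℓ₂, j₂) ∧
    ∃ u ∈ atomEnds F ρ x ℓ₁ j₁, ∃ w ∈ atomEnds F ρ x ℓ₂ j₂, ∃ k : ℤ, w = u + (k : ℝ)

/-- `k` is a *critical time* at level `n`: `k < a_{n+1}` and the atom
`Δ_k = f^{q_n + k q_{n+1}}(I_{n+1}(c₀))` contains a critical point of `f^{q_{n+1}}`. -/
def CritTime (f : MCM) (ρ : ℝ) (i₀ : Fin f.N) (n k : ℕ) : Prop :=
  k < cfDigit ρ (n + 1) ∧
    ∃ x ∈ atomSet f.F ρ (f.c i₀) (n + 1) (qDen ρ n + k * qDen ρ (n + 1)),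
      deriv (f.F^[qDen ρ (n + 1)]) x = 0

/-- `(i, j)` bounds a bridge: `i` is a critical time (or the conventional time `k₀ = 0`),
there is no critical time strictly between `i` and `j`, and `j` is either the next
critical time or the final index `a_{n+1}`. The corresponding bridge is
`G = ⋃_{k=i+1}^{j-1} Δ_k`. -/
def IsBridgePair (f : MCM) (ρ : ℝ) (i₀ : Fin f.N) (n i j : ℕ) : Prop :=
  (CritTime f ρ i₀ n i ∨ i = 0) ∧ i < j ∧
    (∀ k, i < k → k < j → ¬CritTime f ρ i₀ n k) ∧
    (CritTime f ρ i₀ n j ∨ j = cfDigit ρ (n + 1))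

/-- The length of the union `⋃_{k=lo}^{hi-1} Δ_k` of consecutive atoms
`Δ_k = f^{q_n + k q_{n+1}}(I_{n+1}(c₀))`. -/
def bridgeLen (f : MCM) (ρ : ℝ) (i₀ : Fin f.N) (n lo hi : ℕ) : ℝ :=
  ∑ k ∈ Finset.Ico lo hi, atomLen f.F ρ (f.c i₀) (n + 1) (qDen ρ n + k * qDen ρ (n + 1))




/-- The cross-ratio used throughout. -/
def blX (u v w t : ℝ) : ℝ := (v - u) * (t - w) / ((w - u) * (t - v))

open Classical in
/-- Indicator that `[u,t]` meets the integer translates of `crit`. -/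
def blInd (crit : Finset ℝ) (u t : ℝ) : ℝ :=
  if ∃ c ∈ crit, ∃ a : ℤ, u ≤ c + a ∧ c + a ≤ t then 1 else 0

/-- Reflection-invariant package of the analytic facts about a multicritical circle map. -/
structure BlSys where
  F : ℝ → ℝ
  h : ℝ → ℝ
  rho : ℝ
  cont : Continuous F
  mono : StrictMono F
  deg : ∀ x, F (x + 1) = F x + 1
  hmono : Monotone h
  hdeg : ∀ x, h (x + 1) = h x + 1
  hF : ∀ x, h (F x) = h x + rho
  crit : Finset ℝ
  C0 : ℝ
  C0_nonneg : 0 ≤ C0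
  one : ∀ u v w t, u < v → v < w → w < t → t - u ≤ 4 →
    blX (F u) (F v) (F w) (F t) ≤ Real.exp (C0 * ((t - u) + blInd crit u t)) * blX u v w t
  pl : ∀ c ∈ crit, ∃ s al be : ℝ, 1 < s ∧ 0 < al ∧ 0 < be ∧ ∀ x, |x - c| ≤ 1 →
    al * |x - c| ^ s ≤ |F x - F c| ∧ |F x - F c| ≤ be * |x - c| ^ s

/-- arithmetic data of two consecutive return times -/
structure BlGood (rho : ℝ) (q : ℕ) (p : ℤ) (q' : ℕ) : Prop where
  qpos : 0 < q
  qle : q ≤ q'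
  thne : 0 < |(q : ℝ) * rho - p|
  thlt : |(q : ℝ) * rho - p| < 1
  best : ∀ (d : ℕ) (a : ℤ), 0 < d → d < q' →
    |(q : ℝ) * rho - p| < |(d : ℝ) * rho - a| ∨ (d = q ∧ a = p)
  cover : ∀ t : ℝ, ∃ (k : ℕ) (a : ℤ), k ≤ 2 * q' ∧ t ≤ (k : ℝ) * rho + a ∧
    (k : ℝ) * rho + a ≤ t + |(q : ℝ) * rho - p|

/-- The return map `F^q - p`. -/
def blSt (F : ℝ → ℝ) (q : ℕ) (p : ℤ) (x : ℝ) : ℝ := F^[q] x - p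

theorem blX_pos {u v w t : ℝ} (h1 : u < v) (h2 : v < w) (h3 : w < t) : 0 < blX u v w t := by
  unfold blX
  apply div_pos <;> apply mul_pos <;> linarith

theorem blX_add (u v w t a : ℝ) : blX (u + a) (v + a) (w + a) (t + a) = blX u v w t := by
  unfold blX
  congr 2 <;> ring

theorem blX_le_left {u v w t : ℝ} (h1 : u < v) (h2 : v < w) (h3 : w < t) :
    blX u v w t ≤ (v - u) / (w - u) := by
  unfold blX
  rw [mul_div_mul_comm]
  have : (t - w) / (t - v) ≤ 1 := by rw [div_le_one] <;> linarith
  have h : 0 ≤ (v - u) / (w - u) := div_nonneg (by linarith) (by linarith)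
  nlinarith

theorem blX_le_right {u v w t : ℝ} (h1 : u < v) (h2 : v < w) (h3 : w < t) :
    blX u v w t ≤ (t - w) / (t - v) := by
  unfold blX
  rw [mul_div_mul_comm]
  have : (v - u) / (w - u) ≤ 1 := by rw [div_le_one] <;> linarith
  have h : 0 ≤ (t - w) / (t - v) := div_nonneg (by linarith) (by linarith)
  nlinarith

theorem blX_ge_quarter {u v w t : ℝ} (h1 : u < v) (h2 : v < w) (h3 : w < t)
    (h4 : w - v ≤ v - u) (h5 : w - v ≤ t - w) : 1 / 4 ≤ blX u v w t := by
  unfold blX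
  rw [div_le_div_iff₀ (by norm_num) (mul_pos (by linarith) (by linarith))]
  have : (w - u) * (t - v) ≤ (2 * (v - u)) * (2 * (t - w)) := by
    apply mul_le_mul <;> linarith
  linarith

namespace BlSys
variable (S : BlSys)

theorem map_add_int (x : ℝ) (a : ℤ) : S.F (x + a) = S.F x + a :=
  (⟨⟨S.F, S.mono.monotone⟩, S.deg⟩ : CircleDeg1Lift).map_add_int x a

theorem h_add_int (x : ℝ) (a : ℤ) : S.h (x + a) = S.h x + a :=
  (⟨⟨S.h, S.hmono⟩, S.hdeg⟩ : CircleDeg1Lift).map_add_int x a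

theorem it_add_int (k : ℕ) (x : ℝ) (a : ℤ) : S.F^[k] (x + a) = S.F^[k] x + a := by
  induction k generalizing x with
  | zero => simp
  | succ k ih => rw [Function.iterate_succ_apply, map_add_int, ih, Function.iterate_succ_apply]

theorem it_sub_int (k : ℕ) (x : ℝ) (a : ℤ) : S.F^[k] (x - a) = S.F^[k] x - a := by
  have := S.it_add_int k x (-a)
  push_cast at this
  simpa [sub_eq_add_neg] using this

theorem h_it (k : ℕ) (x : ℝ) : S.h (S.F^[k] x) = S.h x + k * S.rho := by
  induction k generalizing x with
  | zero => simp
  | succ k ih => rw [Function.iterate_succ_apply, ih, S.hF]; push_cast; ring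

theorem h_it_add (k : ℕ) (x : ℝ) (a : ℤ) : S.h (S.F^[k] x + a) = S.h x + (k * S.rho + a) := by
  rw [h_add_int, h_it]; ring

theorem h_st (q : ℕ) (p : ℤ) (x : ℝ) : S.h (blSt S.F q p x) = S.h x + (q * S.rho - p) := by
  have := S.h_it_add q x (-p)
  push_cast at this
  unfold blSt
  rw [sub_eq_add_neg, this]; ring

theorem it_mono (k : ℕ) : StrictMono (S.F^[k]) := S.mono.iterate k

theorem it_cont (k : ℕ) : Continuous (S.F^[k]) := S.cont.iterate k

theorem st_mono (q : ℕ) (p : ℤ) : StrictMono (blSt S.F q p) := by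
  intro x y hxy
  have := S.it_mono q hxy
  unfold blSt; linarith

theorem st_cont (q : ℕ) (p : ℤ) : Continuous (blSt S.F q p) := (S.it_cont q).sub continuous_const

theorem F_surj : Function.Surjective S.F := by
  let f : CircleDeg1Lift := ⟨⟨S.F, S.mono.monotone⟩, S.deg⟩
  exact S.cont.surjective f.tendsto_atTop f.tendsto_atBot

theorem it_surj (k : ℕ) : Function.Surjective (S.F^[k]) := S.F_surj.iterate k

theorem st_surj (q : ℕ) (p : ℤ) : Function.Surjective (blSt S.F q p) := by
  intro y
  obtain ⟨x, hx⟩ := S.it_surj q (y + p)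
  exact ⟨x, by unfold blSt; rw [hx]; ring⟩

theorem st_add_int (q : ℕ) (p : ℤ) (x : ℝ) (a : ℤ) :
    blSt S.F q p (x + a) = blSt S.F q p x + a := by
  unfold blSt; rw [it_add_int]; ring

theorem st_it (q : ℕ) (p : ℤ) (k : ℕ) (x : ℝ) :
    blSt S.F q p (S.F^[k] x) = S.F^[k] (blSt S.F q p x) := by
  unfold blSt
  rw [it_sub_int, ← Function.iterate_add_apply, ← Function.iterate_add_apply, add_comm]

theorem st_st (q : ℕ) (p : ℤ) (q' : ℕ) (p' : ℤ) (x : ℝ) :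
    blSt S.F q p (blSt S.F q' p' x) = blSt S.F q' p' (blSt S.F q p x) := by
  have h1 : blSt S.F q' p' x = S.F^[q'] x - p' := rfl
  have h2 : ∀ y, blSt S.F q' p' y = S.F^[q'] y - p' := fun _ => rfl
  have h3 := S.st_add_int q p (S.F^[q'] x) (-p')
  push_cast at h3
  rw [h1, h2, sub_eq_add_neg, h3, st_it]; ring

theorem st_iter (q : ℕ) (p : ℤ) (i : ℕ) (x : ℝ) :
    (blSt S.F q p)^[i] x = S.F^[i * q] x - ((i * p : ℤ) : ℝ) := by
  induction i with
  | zero => simp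
  | succ i ih =>
    rw [Function.iterate_succ_apply', ih]
    unfold blSt
    rw [it_sub_int, ← Function.iterate_add_apply, add_mul, one_mul, add_comm q]
    push_cast; ring

theorem lt_of_h {x y : ℝ} (h : S.h x < S.h y) : x < y := S.hmono.reflect_lt h

theorem lt_st {q : ℕ} {p : ℤ} (hth : 0 < (q : ℝ) * S.rho - p) (x : ℝ) : x < blSt S.F q p x := by
  apply S.lt_of_h; rw [h_st]; linarith

theorem st_lt {q : ℕ} {p : ℤ} (hth : (q : ℝ) * S.rho - p < 0) (x : ℝ) : blSt S.F q p x < x := by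
  apply S.lt_of_h; rw [h_st]; linarith

theorem st_lt_add_one {q : ℕ} {p : ℤ} (hth : (q : ℝ) * S.rho - p < 1) (x : ℝ) :
    blSt S.F q p x < x + 1 := by
  apply S.lt_of_h; rw [h_st, S.hdeg]; linarith

variable {S} {q q' : ℕ} {p : ℤ}

/-- left endpoint disjointness -/
theorem disj_left (G : BlGood S.rho q p q') (hth : 0 < (q : ℝ) * S.rho - p) (y : ℝ) {i i' : ℕ}
    (hi : i < q') (hi' : i' < q') (a : ℤ) (h1 : S.F^[i] y ≤ S.F^[i'] y + a)
    (h2 : S.F^[i'] y + a < S.F^[i] (blSt S.F q p y)) : i = i' := by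
  by_contra hne
  have e1 := S.hmono h1
  have e2 := S.hmono h2.le
  rw [h_it, h_it_add] at e1
  rw [h_it_add, h_it, h_st] at e2
  have habs := abs_of_pos hth
  rcases lt_or_gt_of_ne hne with hlt | hgt
  · obtain ⟨d, rfl⟩ := Nat.exists_eq_add_of_lt hlt
    rcases G.best (d + 1) (-a) (by omega) (by omega) with hb | ⟨hb1, hb2⟩
    · rw [habs] at hb
      push_cast at hb e1 e2
      rw [abs_of_nonneg (by linarith)] at hb
      linarith
    · have : i + d + 1 = q + i := by omega
      rw [this, ← st_it] at h2
      unfold blSt at h2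
      rw [← Function.iterate_add_apply, ← hb2] at h2
      push_cast at h2
      linarith
  · obtain ⟨d, rfl⟩ := Nat.exists_eq_add_of_lt hgt
    rcases G.best (d + 1) a (by omega) (by omega) with hb | ⟨hb1, hb2⟩
    · rw [habs] at hb
      push_cast at hb e1 e2
      rw [abs_of_nonpos (by linarith)] at hb
      linarith
    · rw [← hb1, ← hb2] at hth
      push_cast at hth e1
      linarith

theorem disj (G : BlGood S.rho q p q') (hth : 0 < (q : ℝ) * S.rho - p) (y : ℝ) {i i' : ℕ}
    (hi : i < q') (hi' : i' < q') (x : ℝ) (a : ℤ) (h1 : S.F^[i] y ≤ x)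
    (h2 : x < S.F^[i] (blSt S.F q p y)) (h3 : S.F^[i'] y ≤ x + a)
    (h4 : x + a < S.F^[i'] (blSt S.F q p y)) : i = i' := by
  rcases le_total (S.F^[i] y + a) (S.F^[i'] y) with h | h
  · refine disj_left G hth y hi hi' (-a) ?_ ?_ <;> push_cast <;> linarith
  · refine (disj_left G hth y hi' hi a ?_ ?_).symm <;> linarith

/-- disjoint intervals in a unit interval -/
theorem sum_len_le (s : Finset ℕ) (l r : ℕ → ℝ) (y : ℝ)
    (hlr : ∀ i ∈ s, l i ≤ r i) (hl : ∀ i ∈ s, y ≤ l i) (hr : ∀ i ∈ s, r i ≤ y + 1)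
    (hd : ∀ i ∈ s, ∀ j ∈ s, ∀ x, x ∈ Ico (l i) (r i) → x ∈ Ico (l j) (r j) → i = j) :
    ∑ i ∈ s, (r i - l i) ≤ 1 := by
  have h1 : volume (⋃ i ∈ s, Ico (l i) (r i)) = ∑ i ∈ s, volume (Ico (l i) (r i)) := by
    apply measure_biUnion_finset
    · intro i hi j hj hij
      apply Set.disjoint_left.mpr
      intro x hx hx'
      exact hij (hd i hi j hj x hx hx')
    · intro i _; exact measurableSet_Ico
  have h2 : volume (⋃ i ∈ s, Ico (l i) (r i)) ≤ volume (Ico y (y + 1)) := by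
    apply measure_mono
    intro x hx
    simp only [mem_iUnion] at hx
    obtain ⟨i, hi, hx⟩ := hx
    exact ⟨(hl i hi).trans hx.1, hx.2.trans_le (hr i hi)⟩
  rw [h1] at h2
  simp only [Real.volume_Ico] at h2
  rw [← ENNReal.ofReal_sum_of_nonneg (fun i hi => by linarith [hlr i hi])] at h2
  have : y + 1 - y = 1 := by ring
  rw [this] at h2
  exact (ENNReal.ofReal_le_ofReal_iff (by norm_num)).mp h2

theorem sum_orbit_le (G : BlGood S.rho q p q') (hth : 0 < (q : ℝ) * S.rho - p) (y : ℝ) :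
    ∑ i ∈ Finset.range q', (S.F^[i] (blSt S.F q p y) - S.F^[i] y) ≤ 1 := by
  have hlt1 : (q : ℝ) * S.rho - p < 1 := by have := G.thlt; rwa [abs_of_pos hth] at this
  have hq' : 0 < q' := lt_of_lt_of_le G.qpos G.qle
  let b : ℕ → ℤ := fun i => -⌊S.F^[i] y - y⌋
  have hb1 : ∀ i, y ≤ S.F^[i] y + b i := by
    intro i
    have := Int.floor_le (S.F^[i] y - y)
    simp only [b]; push_cast; linarith
  have hb2 : ∀ i, S.F^[i] y + b i < y + 1 := by
    intro i
    have := Int.lt_floor_add_one (S.F^[i] y - y)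
    simp only [b]; push_cast; linarith
  have := sum_len_le (Finset.range q') (fun i => S.F^[i] y + b i)
    (fun i => S.F^[i] (blSt S.F q p y) + b i) y ?_ ?_ ?_ ?_
  · refine le_trans (le_of_eq ?_) this
    apply Finset.sum_congr rfl
    intro i _; ring
  · intro i _
    have := (S.it_mono i (S.lt_st hth y)).le
    linarith
  · intro i _; exact hb1 i
  · intro i hi
    by_contra hcon
    push Not at hcon
    have hi0 : i = 0 := by
      refine disj_left G hth y (Finset.mem_range.mp hi) hq' (1 - b i) ?_ ?_
      · have := hb2 i
        push_cast
        simp only [Function.iterate_zero, id]; linarith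
      · push_cast
        simp only [Function.iterate_zero, id]; linarith
    subst hi0
    have h0 : b 0 = 0 := by simp [b]
    rw [h0] at hcon
    have := S.st_lt_add_one hlt1 y
    simp only [Function.iterate_zero, id, Int.cast_zero] at hcon
    linarith
  · intro i hi j hj x hx hx'
    simp only [mem_Ico] at hx hx'
    refine disj G hth y (Finset.mem_range.mp hi) (Finset.mem_range.mp hj) (x - b i) (b i - b j)
      ?_ ?_ ?_ ?_ <;> push_cast <;> linarith [hx.1, hx.2, hx'.1, hx'.2]

end BlSys


namespace BlSys
variable {S : BlSys} {q q' : ℕ} {p : ℤ}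

theorem cri_steps (k : ℕ) (u v w t : ℝ) (h1 : u < v) (h2 : v < w) (h3 : w < t)
    (h4 : ∀ i < k, S.F^[i] t - S.F^[i] u ≤ 4) :
    blX (S.F^[k] u) (S.F^[k] v) (S.F^[k] w) (S.F^[k] t) ≤
      Real.exp (S.C0 * ∑ i ∈ Finset.range k, ((S.F^[i] t - S.F^[i] u) +
        blInd S.crit (S.F^[i] u) (S.F^[i] t))) * blX u v w t := by
  induction k with
  | zero => simp
  | succ k ih =>
    have ih' := ih (fun i hi => h4 i (by omega))
    have := S.one _ _ _ _ (S.it_mono k h1) (S.it_mono k h2) (S.it_mono k h3) (h4 k (by omega))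
    rw [Finset.sum_range_succ, mul_add, Real.exp_add]
    simp only [Function.iterate_succ_apply']
    refine this.trans ?_
    calc _ ≤ Real.exp (S.C0 * (S.F^[k] t - S.F^[k] u + blInd S.crit (S.F^[k] u) (S.F^[k] t))) * _ :=
          mul_le_mul_of_nonneg_left ih' (Real.exp_pos _).le
      _ = _ := by ring

theorem sum_bound (G : BlGood S.rho q p q') (hth : 0 < (q : ℝ) * S.rho - p) (u t : ℝ)
    (ht : t < (blSt S.F q p)^[4] u) :
    ∑ i ∈ Finset.range q', ((S.F^[i] t - S.F^[i] u) +
        blInd S.crit (S.F^[i] u) (S.F^[i] t)) ≤ 4 + 4 * S.crit.card := by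
  classical
  set s := blSt S.F q p with hs
  rw [Finset.sum_add_distrib]
  apply add_le_add
  · calc ∑ i ∈ Finset.range q', (S.F^[i] t - S.F^[i] u)
        ≤ ∑ i ∈ Finset.range q', ∑ j ∈ Finset.range 4,
          (S.F^[i] (s (s^[j] u)) - S.F^[i] (s^[j] u)) := by
          apply Finset.sum_le_sum
          intro i _
          have := (S.it_mono i ht).le
          simp only [Finset.sum_range_succ, Finset.sum_range_zero, Function.iterate_succ_apply',
            Function.iterate_zero, id] at this ⊢
          linarith
      _ = ∑ j ∈ Finset.range 4, ∑ i ∈ Finset.range q',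
          (S.F^[i] (s (s^[j] u)) - S.F^[i] (s^[j] u)) := Finset.sum_comm
      _ ≤ ∑ j ∈ Finset.range 4, (1 : ℝ) := by
          apply Finset.sum_le_sum
          intro j _
          exact sum_orbit_le G hth _
      _ = 4 := by simp
  · calc ∑ i ∈ Finset.range q', blInd S.crit (S.F^[i] u) (S.F^[i] t)
        ≤ ∑ i ∈ Finset.range q', ∑ j ∈ Finset.range 4, ∑ c ∈ S.crit,
          (if ∃ a : ℤ, S.F^[i] (s^[j] u) ≤ c + a ∧ c + a < S.F^[i] (s (s^[j] u)) then (1:ℝ) else 0) := by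
          apply Finset.sum_le_sum
          intro i _
          have hnn : ∀ j ∈ Finset.range 4, 0 ≤ ∑ c ∈ S.crit,
            (if ∃ a : ℤ, S.F^[i] (s^[j] u) ≤ c + a ∧ c + a < S.F^[i] (s (s^[j] u)) then (1:ℝ) else 0) := by
            intro j _
            apply Finset.sum_nonneg
            intro c _
            split_ifs <;> norm_num
          unfold blInd
          split_ifs with hc
          · obtain ⟨c, hc, a, ha1, ha2⟩ := hc
            have hj : ∃ j ∈ Finset.range 4, S.F^[i] (s^[j] u) ≤ c + a ∧ c + a < S.F^[i] (s (s^[j] u)) := by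
              have h4 := ha2.trans_lt (S.it_mono i ht)
              by_contra hcon
              push Not at hcon
              have g0 := hcon 0 (by simp) (by simpa using ha1)
              have g1 := hcon 1 (by simp) (by simpa using g0)
              have g2 := hcon 2 (by simp) (by simpa using g1)
              have g3 := hcon 3 (by simp) (by simpa using g2)
              simp only [Function.iterate_succ_apply', Function.iterate_zero, id] at g3 h4
              linarith
            obtain ⟨j, hj, hjj⟩ := hj
            refine le_trans ?_ (Finset.single_le_sum hnn hj)
            have := Finset.single_le_sum (s := S.crit) (f := fun c => if ∃ a : ℤ, S.F^[i] (s^[j] u) ≤ c + a ∧ c + a < S.F^[i] (s (s^[j] u)) then (1:ℝ) else 0) (fun c _ => by split_ifs <;> norm_num) hc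
            refine le_trans ?_ this
            rw [if_pos ⟨a, hjj⟩]
          · exact Finset.sum_nonneg hnn
      _ = ∑ j ∈ Finset.range 4, ∑ c ∈ S.crit, ∑ i ∈ Finset.range q',
          (if ∃ a : ℤ, S.F^[i] (s^[j] u) ≤ c + a ∧ c + a < S.F^[i] (s (s^[j] u)) then (1:ℝ) else 0) := by
          rw [Finset.sum_comm]
          apply Finset.sum_congr rfl
          intro j _
          rw [Finset.sum_comm]
      _ ≤ ∑ j ∈ Finset.range 4, ∑ c ∈ S.crit, (1 : ℝ) := by
          apply Finset.sum_le_sum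
          intro j _
          apply Finset.sum_le_sum
          intro c _
          rw [Finset.sum_boole]
          have : (Finset.filter (fun i => ∃ a : ℤ, S.F^[i] (s^[j] u) ≤ c + a ∧ c + a < S.F^[i] (s (s^[j] u))) (Finset.range q')).card ≤ 1 := by
            rw [Finset.card_le_one]
            intro i hi i' hi'
            rw [Finset.mem_filter, Finset.mem_range] at hi hi'
            obtain ⟨hi, a, ha1, ha2⟩ := hi
            obtain ⟨hi', a', ha1', ha2'⟩ := hi'
            refine disj G hth (s^[j] u) hi hi' (c + a) (a' - a) ha1 ha2 ?_ ?_ <;> push_cast <;> linarith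
          exact_mod_cast this
      _ = 4 * S.crit.card := by simp

/-- The cross-ratio constant. -/
def B (S : BlSys) : ℝ := Real.exp (S.C0 * (4 + 4 * S.crit.card))

theorem one_le_B (S : BlSys) : 1 ≤ S.B := by
  unfold B
  apply Real.one_le_exp
  have := S.C0_nonneg
  positivity

theorem st4_lt (hlt1 : (q : ℝ) * S.rho - p < 1) (u : ℝ) : (blSt S.F q p)^[4] u < u + 4 := by
  simp only [Function.iterate_succ_apply', Function.iterate_zero, id]
  have h := S.st_lt_add_one hlt1
  have a1 := h u
  have a2 := h (blSt S.F q p u)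
  have a3 := h (blSt S.F q p (blSt S.F q p u))
  have a4 := h (blSt S.F q p (blSt S.F q p (blSt S.F q p u)))
  linarith

theorem st_iter_it (q : ℕ) (p : ℤ) (j k : ℕ) (x : ℝ) :
    (blSt S.F q p)^[j] (S.F^[k] x) = S.F^[k] ((blSt S.F q p)^[j] x) := by
  induction j with
  | zero => simp
  | succ j ih => rw [Function.iterate_succ_apply', ih, st_it, Function.iterate_succ_apply']

theorem cri_one (G : BlGood S.rho q p q') (hth : 0 < (q : ℝ) * S.rho - p) {k : ℕ} (hk : k ≤ q')
    {u v w t : ℝ} (h1 : u < v) (h2 : v < w) (h3 : w < t) (ht : t < (blSt S.F q p)^[4] u) :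
    blX (S.F^[k] u) (S.F^[k] v) (S.F^[k] w) (S.F^[k] t) ≤ S.B * blX u v w t := by
  have hlt1 : (q : ℝ) * S.rho - p < 1 := by have := G.thlt; rwa [abs_of_pos hth] at this
  refine (cri_steps k u v w t h1 h2 h3 ?_).trans ?_
  · intro i _
    have := S.it_mono i ht
    rw [← st_iter_it] at this
    have := st4_lt hlt1 (S.F^[i] u)
    linarith
  · apply mul_le_mul_of_nonneg_right _ (blX_pos h1 h2 h3).le
    unfold B
    apply Real.exp_le_exp.mpr
    apply mul_le_mul_of_nonneg_left _ S.C0_nonneg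
    refine le_trans ?_ (sum_bound G hth u t ht)
    apply Finset.sum_le_sum_of_subset_of_nonneg
    · exact Finset.range_subset_range.mpr hk
    · intro i _ _
      have := S.it_mono i (h1.trans (h2.trans h3))
      have h0 : 0 ≤ blInd S.crit (S.F^[i] u) (S.F^[i] t) := by
        unfold blInd; split_ifs <;> norm_num
      linarith

theorem cri (G : BlGood S.rho q p q') (hth : 0 < (q : ℝ) * S.rho - p) (m : ℕ) {k : ℕ}
    (hk : k ≤ m * q')
    {u v w t : ℝ} (h1 : u < v) (h2 : v < w) (h3 : w < t) (ht : t < (blSt S.F q p)^[4] u) :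
    blX (S.F^[k] u) (S.F^[k] v) (S.F^[k] w) (S.F^[k] t) ≤ S.B ^ m * blX u v w t := by
  induction m generalizing k u v w t with
  | zero =>
    have : k = 0 := by omega
    subst this; simp
  | succ m ih =>
    rcases le_total k q' with hk' | hk'
    · refine (cri_one G hth hk' h1 h2 h3 ht).trans ?_
      apply mul_le_mul_of_nonneg_right _ (blX_pos h1 h2 h3).le
      exact le_self_pow₀ S.one_le_B (by omega)
    · obtain ⟨d, rfl⟩ := Nat.exists_eq_add_of_le' hk'
      simp only [Function.iterate_add_apply]
      have hd : d ≤ m * q' := by rw [add_mul] at hk; omega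
      have e1 := ih hd (S.it_mono q' h1) (S.it_mono q' h2) (S.it_mono q' h3)
        (by rw [st_iter_it]; exact S.it_mono q' ht)
      refine e1.trans ?_
      have e2 := cri_one G hth le_rfl h1 h2 h3 ht
      have hB : 0 < S.B ^ m := pow_pos (by linarith [S.one_le_B]) m
      calc S.B ^ m * _ ≤ S.B ^ m * (S.B * blX u v w t) := mul_le_mul_of_nonneg_left e2 hB.le
        _ = _ := by ring

theorem exists_min (S : BlSys) (q : ℕ) (p : ℤ) :
    ∃ z, ∀ x, blSt S.F q p z - z ≤ blSt S.F q p x - x := by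
  have hc : Continuous (fun x => blSt S.F q p x - x) := (S.st_cont q p).sub continuous_id
  obtain ⟨z, _, hz⟩ := isCompact_Icc.exists_isMinOn (nonempty_Icc.mpr (zero_le_one (α := ℝ))) hc.continuousOn
  refine ⟨z, fun x => ?_⟩
  have h1 := hz (show Int.fract x ∈ Icc (0:ℝ) 1 from ⟨Int.fract_nonneg x, (Int.fract_lt_one x).le⟩)
  have h2 := S.st_add_int q p (Int.fract x) ⌊x⌋
  rw [Int.fract_add_floor] at h2
  have h3 := Int.fract_add_floor x
  simp only [Set.mem_ofPred_eq] at h1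
  linarith

/-- pulled back minimal intervals have space -/
theorem pull_min (G : BlGood S.rho q p q') (hth : 0 < (q : ℝ) * S.rho - p) {z : ℝ}
    (hz : ∀ x, blSt S.F q p z - z ≤ blSt S.F q p x - x) (m : ℕ) {k : ℕ} (hk : k ≤ m * q')
    (y : ℝ) (a : ℤ) (hy : S.F^[k] (blSt S.F q p y) = z + a) :
    (blSt S.F q p)^[2] y - (blSt S.F q p)^[1] y ≤ 4 * S.B ^ m * ((blSt S.F q p)^[1] y - y) ∧
    (blSt S.F q p)^[2] y - (blSt S.F q p)^[1] y ≤
      4 * S.B ^ m * ((blSt S.F q p)^[3] y - (blSt S.F q p)^[2] y) := by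
  simp only [Function.iterate_succ_apply', Function.iterate_zero, id]
  set s := blSt S.F q p with hs
  have hl : ∀ x, x < s x := S.lt_st hth
  have h1 := hl y
  have h2 := hl (s y)
  have h3 := hl (s (s y))
  have h4 := hl (s (s (s y)))
  have hcr := cri G hth m hk h1 h2 h3 (by
    simpa only [Function.iterate_succ_apply', Function.iterate_zero, id] using h4)
  have hmin : ∀ x, s (z + a) - (z + a) ≤ s x - x := by
    intro x
    have := hz x
    rw [hs, st_add_int]; linarith
  have hcomm : ∀ x, S.F^[k] (s x) = s (S.F^[k] x) := fun x => (S.st_it q p k x).symm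
  have hq : 1 / 4 ≤ blX (S.F^[k] y) (S.F^[k] (s y)) (S.F^[k] (s (s y))) (S.F^[k] (s (s (s y)))) := by
    apply blX_ge_quarter (S.it_mono k h1) (S.it_mono k h2) (S.it_mono k h3)
    · have e1 := hmin (S.F^[k] y)
      rw [← hcomm, hy] at e1
      rw [hcomm (s y), hy]; exact e1
    · have e1 := hmin (S.F^[k] (s (s y)))
      rw [← hcomm, hcomm (s y), hy] at e1
      rw [hcomm (s y), hy]; exact e1
  have hB : 0 < S.B ^ m := pow_pos (by linarith [S.one_le_B]) m
  constructor
  · have := blX_le_left h1 h2 h3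
    have h5 : 1 / 4 ≤ S.B ^ m * ((s y - y) / (s (s y) - y)) :=
      hq.trans (hcr.trans (mul_le_mul_of_nonneg_left this hB.le))
    rw [← mul_div_assoc, div_le_div_iff₀ (by norm_num) (by linarith)] at h5
    linarith
  · have := blX_le_right h1 h2 h3
    have h5 := hq.trans (hcr.trans (mul_le_mul_of_nonneg_left this hB.le))
    rw [← mul_div_assoc, div_le_div_iff₀ (by norm_num) (by linarith)] at h5
    linarith

end BlSys


namespace BlSys
variable {S : BlSys} {q q' : ℕ} {p : ℤ}

theorem cri_st (G : BlGood S.rho q p q') (hth : 0 < (q : ℝ) * S.rho - p)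
    {u v w t : ℝ} (h1 : u < v) (h2 : v < w) (h3 : w < t) (ht : t < (blSt S.F q p)^[4] u) :
    blX (blSt S.F q p u) (blSt S.F q p v) (blSt S.F q p w) (blSt S.F q p t)
      ≤ S.B * blX u v w t := by
  have := cri_one G hth G.qle h1 h2 h3 ht
  unfold blSt
  simp only [sub_eq_add_neg]
  rw [blX_add]; exact this

theorem visit (G : BlGood S.rho q p q') (hth : 0 < (q : ℝ) * S.rho - p) (x z : ℝ) :
    ∃ (k : ℕ) (a : ℤ), 7 * q ≤ k ∧ k ≤ 11 * q' ∧ z ≤ S.F^[k] x + a ∧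
      S.F^[k] x + a < blSt S.F q p z := by
  obtain ⟨k, a, hk, h1, h2⟩ := G.cover (S.h z - S.h (S.F^[8 * q] x))
  rw [abs_of_pos hth] at h2
  have hh : S.h (S.F^[k + 8 * q] x + a) = S.h (S.F^[8 * q] x) + (k * S.rho + a) := by
    rw [Function.iterate_add_apply, h_it_add]
  have hq := G.qle
  set x' := S.F^[k + 8 * q] x + a with hx'
  have hs : S.F^[k + 9 * q] x + ((a - p : ℤ) : ℝ) = blSt S.F q p x' := by
    rw [hx', st_add_int]
    unfold blSt
    rw [← Function.iterate_add_apply, show q + (k + 8 * q) = k + 9 * q by ring]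
    push_cast; ring
  have hs' : blSt S.F q p (S.F^[k + 7 * q] x + ((a + p : ℤ) : ℝ)) = x' := by
    rw [hx', st_add_int]
    unfold blSt
    rw [← Function.iterate_add_apply, show q + (k + 7 * q) = k + 8 * q by ring]
    push_cast; ring
  rcases lt_or_ge x' z with hlt | hge
  · refine ⟨k + 9 * q, a - p, by omega, by omega, ?_, ?_⟩
    · rw [hs]
      apply le_of_lt
      apply S.lt_of_h
      rw [h_st]; linarith
    · rw [hs]; exact S.st_mono q p hlt
  · rcases lt_or_ge x' (blSt S.F q p z) with hlt | hge'
    · exact ⟨k + 8 * q, a, by omega, by omega, hge, hlt⟩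
    · refine ⟨k + 7 * q, a + p, by omega, by omega, ?_, ?_⟩
      · rw [← hs'] at hge'
        exact (S.st_mono q p).le_iff_le.mp hge'
      · apply S.lt_of_h
        have := S.h_st q p (S.F^[k + 7 * q] x + ((a + p : ℤ) : ℝ))
        rw [hs'] at this
        rw [h_st]; linarith

theorem exists_chain (G : BlGood S.rho q p q') (hth : 0 < (q : ℝ) * S.rho - p) (x : ℝ) :
    ∃ y, blSt S.F q p y ≤ x ∧ x < blSt S.F q p (blSt S.F q p y) ∧
      ∀ i < 5, (blSt S.F q p)^[i + 2] y - (blSt S.F q p)^[i + 1] y ≤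
          4 * S.B ^ 11 * ((blSt S.F q p)^[i + 1] y - (blSt S.F q p)^[i] y) ∧
        (blSt S.F q p)^[i + 2] y - (blSt S.F q p)^[i + 1] y ≤
          4 * S.B ^ 11 * ((blSt S.F q p)^[i + 3] y - (blSt S.F q p)^[i + 2] y) := by
  obtain ⟨z, hz⟩ := S.exists_min q p
  obtain ⟨k, a, hk1, hk2, h1, h2⟩ := visit G hth x z
  obtain ⟨y1, hy1⟩ := S.it_surj k (z - a)
  obtain ⟨y, hy⟩ := S.st_surj q p y1
  refine ⟨y, ?_, ?_, ?_⟩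
  · rw [hy]
    apply (S.it_mono k).le_iff_le.mp
    rw [hy1]; linarith
  · rw [hy]
    apply (S.it_mono k).lt_iff_lt.mp
    have := S.st_add_int q p z (-a)
    rw [← st_it, hy1, sub_eq_add_neg]
    push_cast at this
    rw [this]; linarith
  · intro i hi
    have hle : i * q ≤ k := by nlinarith
    have := pull_min G hth hz 11 (k := k - i * q) (by omega) ((blSt S.F q p)^[i] y) (-a - i * p) (by
      rw [← Function.iterate_succ_apply' (blSt S.F q p), Function.iterate_succ_apply, hy, st_iter, it_sub_int,
        ← Function.iterate_add_apply, Nat.sub_add_cancel hle, hy1]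
      push_cast; ring)
    simp only [← Function.iterate_add_apply] at this
    rw [show i + 2 = 2 + i by ring, show i + 1 = 1 + i by ring, show i + 3 = 3 + i by ring]
    exact this

/-- Real bounds: consecutive return intervals are comparable. -/
theorem r1_pos (S : BlSys) : ∃ C : ℝ, 1 ≤ C ∧ ∀ (q : ℕ) (p : ℤ) (q' : ℕ),
    BlGood S.rho q p q' → 0 < (q : ℝ) * S.rho - p → ∀ x,
    blSt S.F q p (blSt S.F q p x) - blSt S.F q p x ≤ C * (blSt S.F q p x - x) ∧
    blSt S.F q p x - x ≤ C * (blSt S.F q p (blSt S.F q p x) - blSt S.F q p x) := by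
  have hB := S.one_le_B
  obtain ⟨c, hc⟩ : ∃ c, c = 4 * S.B ^ 11 := ⟨_, rfl⟩
  have hc4 : 4 ≤ c := by
    have : 1 ≤ S.B ^ 11 := one_le_pow₀ hB
    linarith
  have key : ∀ (q : ℕ) (p : ℤ) (q' : ℕ),
    BlGood S.rho q p q' → 0 < (q : ℝ) * S.rho - p → ∀ x0 x1 x2 x3 x4,
      x1 = blSt S.F q p x0 → x2 = blSt S.F q p x1 → x3 = blSt S.F q p x2 → x4 = blSt S.F q p x3 →
      (x2 - x1 ≤ (c + c ^ 2) * (4 * S.B * c) * (x3 - x2) ∧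
        x4 - x3 ≤ (c + c ^ 2) * (4 * S.B * c) * (x3 - x2)) := by
    intro q p q' G hth x0 x1 x2 x3 x4 e1 e2 e3 e4
    obtain ⟨y0, hy1, hy2, hch⟩ := exists_chain G hth x0
    have hl : ∀ x, x < blSt S.F q p x := S.lt_st hth
    have hm : ∀ {x y}, x < y → blSt S.F q p x < blSt S.F q p y := fun h => S.st_mono q p h
    have hm' : ∀ {x y}, x ≤ y → blSt S.F q p x ≤ blSt S.F q p y :=
      fun h => (S.st_mono q p).monotone h
    rw [← hc] at hch
    obtain ⟨c0, d0⟩ := hch 0 (by norm_num)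
    obtain ⟨c1, d1⟩ := hch 1 (by norm_num)
    obtain ⟨c2, d2⟩ := hch 2 (by norm_num)
    obtain ⟨c3, d3⟩ := hch 3 (by norm_num)
    obtain ⟨c4, d4⟩ := hch 4 (by norm_num)
    norm_num [Function.iterate_succ_apply'] at c0 c1 c2 c3 c4 d0 d1 d2 d3 d4
    obtain ⟨y1, f1⟩ : ∃ y, y = blSt S.F q p y0 := ⟨_, rfl⟩
    obtain ⟨y2, f2⟩ : ∃ y, y = blSt S.F q p y1 := ⟨_, rfl⟩
    obtain ⟨y3, f3⟩ : ∃ y, y = blSt S.F q p y2 := ⟨_, rfl⟩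
    obtain ⟨y4, f4⟩ : ∃ y, y = blSt S.F q p y3 := ⟨_, rfl⟩
    obtain ⟨y5, f5⟩ : ∃ y, y = blSt S.F q p y4 := ⟨_, rfl⟩
    obtain ⟨y6, f6⟩ : ∃ y, y = blSt S.F q p y5 := ⟨_, rfl⟩
    simp only [← f1, ← f2, ← f3, ← f4, ← f5, ← f6] at c0 c1 c2 c3 c4 d0 d1 d2 d3 d4 hy1 hy2
    have a1 := hm' hy1; have b1 := hm hy2
    rw [← f2, ← e1] at a1; rw [← f3, ← e1] at b1
    have a2 := hm' a1; have b2 := hm b1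
    rw [← f3, ← e2] at a2; rw [← f4, ← e2] at b2
    have a3 := hm' a2; have b3 := hm b2
    rw [← f4, ← e3] at a3; rw [← f5, ← e3] at b3
    have a4 := hm' a3; have b4 := hm b3
    rw [← f5, ← e4] at a4; rw [← f6, ← e4] at b4
    have l0 := hl x0; have l1 := hl x1; have l2 := hl x2; have l3 := hl x3; have l4 := hl x4
    rw [← e1] at l0; rw [← e2] at l1; rw [← e3] at l2; rw [← e4] at l3
    have g3 := hl y3
    rw [← f4] at g3
    -- lower bound
    have hlow : y4 - y3 ≤ 4 * S.B * c * (x3 - x2) := by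
      have t1 : 2 * (x3 - x2) ≤ 2 * c * (x3 - x2) :=
        mul_le_mul_of_nonneg_right (by linarith) (by linarith)
      have t2 : 2 * c * (x3 - x2) ≤ 4 * S.B * c * (x3 - x2) := by
        apply mul_le_mul_of_nonneg_right _ (by linarith)
        apply mul_le_mul_of_nonneg_right _ (by linarith)
        linarith
      rcases le_total (x2 - x1) (x3 - x2) with h | h
      · linarith
      rcases le_total (x4 - x3) (x3 - x2) with h' | h'
      · have : y4 - y3 ≤ c * (2 * (x3 - x2)) := by
          have h6 : c * (y5 - y4) ≤ c * (2 * (x3 - x2)) :=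
            mul_le_mul_of_nonneg_left (by linarith) (by linarith)
          linarith
        linarith
      · have hq := blX_ge_quarter l1 l2 l3 h h'
        have hcr := cri_st G hth l0 l1 l2 (by
          simp only [Function.iterate_succ_apply', Function.iterate_zero, id]
          rw [← e1, ← e2, ← e3, ← e4]; exact l3)
        rw [← e1, ← e2, ← e3, ← e4] at hcr
        have h5 := hq.trans (hcr.trans (mul_le_mul_of_nonneg_left (blX_le_right l0 l1 l2)
          (by linarith)))
        rw [← mul_div_assoc, div_le_div_iff₀ (by norm_num) (by linarith)] at h5
        have : 4 * S.B * (x3 - x2) ≤ 4 * S.B * c * (x3 - x2) := by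
          apply mul_le_mul_of_nonneg_right _ (by linarith)
          exact le_mul_of_one_le_right (by linarith) (by linarith)
        linarith
    have hup : ∀ r, r ≤ (c + c ^ 2) * (y4 - y3) → r ≤ (c + c ^ 2) * (4 * S.B * c) * (x3 - x2) := by
      intro r hr
      refine hr.trans ?_
      rw [mul_assoc]
      exact mul_le_mul_of_nonneg_left hlow (by positivity)
    constructor
    · apply hup
      have : (c + 1) * (y4 - y3) ≤ (c + c ^ 2) * (y4 - y3) :=
        mul_le_mul_of_nonneg_right (by nlinarith only [hc4]) (by linarith)
      linarith
    · apply hup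
      have : c * (y5 - y4) ≤ c * (c * (y4 - y3)) :=
        mul_le_mul_of_nonneg_left (by linarith) (by linarith)
      linarith
  refine ⟨(c + c ^ 2) * (4 * S.B * c), ?_, ?_⟩
  · have h1 : 1 ≤ c + c ^ 2 := by nlinarith only [hc4]
    have h2 : 1 ≤ 4 * S.B * c := by nlinarith only [hc4, hB]
    exact one_le_mul_of_one_le_of_one_le h1 h2
  · intro q p q' G hth x
    obtain ⟨x', hx'⟩ := S.st_surj q p x
    obtain ⟨x'', hx''⟩ := S.st_surj q p x'
    constructor
    · exact (key q p q' G hth x'' x' x _ _ hx''.symm hx'.symm rfl rfl).2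
    · exact (key q p q' G hth x' x _ _ _ hx'.symm rfl rfl rfl).1

end BlSys



theorem blGood_neg {rho : ℝ} {q q' : ℕ} {p : ℤ} (G : BlGood rho q p q') :
    BlGood (-rho) q (-p) q' := by
  have e : |(q : ℝ) * (-rho) - ((-p : ℤ) : ℝ)| = |(q : ℝ) * rho - p| := by
    rw [← abs_neg]; congr 1; push_cast; ring
  refine ⟨G.qpos, G.qle, by rw [e]; exact G.thne, by rw [e]; exact G.thlt, ?_, ?_⟩
  · intro d a hd hd'
    rw [e]
    have e2 : |(d : ℝ) * (-rho) - (a : ℝ)| = |(d : ℝ) * rho - ((-a : ℤ) : ℝ)| := by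
      rw [← abs_neg]; congr 1; push_cast; ring
    rw [e2]
    rcases G.best d (-a) hd hd' with h | ⟨h1, h2⟩
    · exact Or.inl h
    · exact Or.inr ⟨h1, by omega⟩
  · intro t
    rw [e]
    obtain ⟨k, a, hk, h1, h2⟩ := G.cover (-t - |(q : ℝ) * rho - p|)
    refine ⟨k, -a, hk, ?_, ?_⟩ <;> push_cast <;> linarith

theorem blX_neg (u v w t : ℝ) : blX (-t) (-w) (-v) (-u) = blX u v w t := by
  unfold blX
  congr 1 <;> ring

theorem blInd_neg (crit : Finset ℝ) (u t : ℝ) :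
    blInd (crit.image (fun x => -x)) u t = blInd crit (-t) (-u) := by
  unfold blInd
  congr 1
  apply propext
  constructor
  · rintro ⟨c, hc, a, h1, h2⟩
    obtain ⟨c', hc', rfl⟩ := Finset.mem_image.mp hc
    exact ⟨c', hc', -a, by push_cast; linarith, by push_cast; linarith⟩
  · rintro ⟨c, hc, a, h1, h2⟩
    exact ⟨-c, Finset.mem_image.mpr ⟨c, hc, rfl⟩, -a, by push_cast; linarith, by push_cast; linarith⟩

namespace BlSys

/-- Reflected system. -/
def refl (S : BlSys) : BlSys where
  F := fun x => -S.F (-x)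
  h := fun x => -S.h (-x)
  rho := -S.rho
  cont := (S.cont.comp continuous_neg).neg
  mono := by
    intro x y hxy
    exact neg_lt_neg (S.mono (neg_lt_neg hxy))
  deg := by
    intro x
    have := S.deg (-(x + 1))
    have e : -(x + 1) + 1 = -x := by ring
    rw [e] at this
    linarith
  hmono := by
    intro x y hxy
    exact neg_le_neg (S.hmono (neg_le_neg hxy))
  hdeg := by
    intro x
    have := S.hdeg (-(x + 1))
    have e : -(x + 1) + 1 = -x := by ring
    rw [e] at this
    linarith
  hF := by
    intro x
    simp only [neg_neg]
    rw [S.hF]; ring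
  crit := S.crit.image (fun x => -x)
  C0 := S.C0
  C0_nonneg := S.C0_nonneg
  one := by
    intro u v w t h1 h2 h3 h4
    have := S.one (-t) (-w) (-v) (-u) (by linarith) (by linarith) (by linarith) (by linarith)
    rw [blX_neg u v w t] at this
    rw [blInd_neg, blX_neg (S.F (-t))]
    convert this using 5
    ring
  pl := by
    intro c hc
    obtain ⟨c', hc', rfl⟩ := Finset.mem_image.mp hc
    obtain ⟨s, al, be, h1, h2, h3, h4⟩ := S.pl c' hc'
    refine ⟨s, al, be, h1, h2, h3, fun x hx => ?_⟩
    have e : |x - -c'| = |-x - c'| := by rw [← abs_neg]; congr 1; ring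
    have e2 : |-S.F (-x) - -S.F (- -c')| = |S.F (-x) - S.F c'| := by
      rw [← abs_neg]; congr 1; rw [neg_neg]; ring
    rw [e] at hx ⊢
    rw [e2]
    exact h4 _ hx

theorem refl_it (S : BlSys) (k : ℕ) (x : ℝ) : S.refl.F^[k] x = -S.F^[k] (-x) := by
  induction k with
  | zero => simp
  | succ k ih =>
    rw [Function.iterate_succ_apply', ih, Function.iterate_succ_apply']
    simp [refl]

theorem refl_st (S : BlSys) (q : ℕ) (p : ℤ) (x : ℝ) :
    blSt S.refl.F q (-p) x = -blSt S.F q p (-x) := by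
  unfold blSt
  rw [refl_it]; push_cast; ring

theorem r1 (S : BlSys) : ∃ C : ℝ, 1 ≤ C ∧ ∀ (q : ℕ) (p : ℤ) (q' : ℕ),
    BlGood S.rho q p q' → ∀ x,
    |blSt S.F q p (blSt S.F q p x) - blSt S.F q p x| ≤ C * |blSt S.F q p x - x| ∧
    |blSt S.F q p x - x| ≤ C * |blSt S.F q p (blSt S.F q p x) - blSt S.F q p x| := by
  obtain ⟨C, hC, h⟩ := S.r1_pos
  obtain ⟨C', hC', h'⟩ := S.refl.r1_pos
  refine ⟨max C C', le_max_of_le_left hC, fun q p q' G x => ?_⟩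
  have main : ∀ K, K ≤ max C C' → ∀ r t : ℝ, |r| ≤ K * |t| → |r| ≤ max C C' * |t| :=
    fun K hK r t hr => hr.trans (mul_le_mul_of_nonneg_right hK (abs_nonneg _))
  rcases lt_or_gt_of_ne (abs_pos.mp G.thne) with hth | hth
  · have hth' : 0 < (q : ℝ) * S.refl.rho - ((-p : ℤ) : ℝ) := by
      simp only [refl]; push_cast; linarith
    have hl : ∀ x, 0 < x - blSt S.F q p x := fun x => by have := S.st_lt hth x; linarith
    obtain ⟨h1, h2⟩ := h' q (-p) q' (blGood_neg G) hth' (-x)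
    simp only [refl_st, neg_neg] at h1 h2
    constructor
    · apply main C' (le_max_right _ _)
      rw [abs_sub_comm, abs_sub_comm _ x, abs_of_pos (hl _), abs_of_pos (hl _)]
      linarith
    · apply main C' (le_max_right _ _)
      rw [abs_sub_comm (blSt S.F q p x) x,
        abs_sub_comm (blSt S.F q p (blSt S.F q p x)) (blSt S.F q p x), abs_of_pos (hl _), abs_of_pos (hl _)]
      linarith
  · have hl : ∀ x, 0 < blSt S.F q p x - x := fun x => by have := S.lt_st hth x; linarith
    obtain ⟨h1, h2⟩ := h q p q' G hth x
    constructor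
    · apply main C (le_max_left _ _)
      rw [abs_of_pos (hl _), abs_of_pos (hl _)]; exact h1
    · apply main C (le_max_left _ _)
      rw [abs_of_pos (hl _), abs_of_pos (hl _)]; exact h2

theorem exists_delta (K s : ℝ) (hK : 0 < K) (hs : 1 < s) :
    ∃ d : ℝ, 0 < d ∧ d < 1 ∧ K * d ^ s ≤ d / 2 := by
  have ht : Tendsto (fun d : ℝ => d ^ (s - 1)) (nhds 0) (nhds 0) := by
    have := (Real.continuousAt_rpow_const 0 (s - 1) (Or.inr (by linarith))).tendsto
    rwa [Real.zero_rpow (by linarith)] at this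
  have h1 : ∀ᶠ d in nhdsWithin (0:ℝ) (Ioi 0), d ^ (s - 1) < 1 / (2 * K) :=
    (ht.mono_left nhdsWithin_le_nhds).eventually_lt_const (by positivity)
  have h2 : ∀ᶠ d in nhdsWithin (0:ℝ) (Ioi 0), d < 1 :=
    (tendsto_id.mono_left nhdsWithin_le_nhds).eventually_lt_const (by norm_num)
  obtain ⟨d, hd1, hd2, hd3⟩ := (h1.and (h2.and self_mem_nhdsWithin)).exists
  have hd3 : 0 < d := hd3
  refine ⟨d, hd3, hd2, ?_⟩
  have : d ^ s = d * d ^ (s - 1) := by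
    rw [mul_comm, Real.rpow_sub_one hd3.ne']; field_simp
  rw [this]
  rw [lt_div_iff₀ (by positivity)] at hd1
  nlinarith

/-- The critical argument. -/
theorem crit_large (S : BlSys) : ∀ c ∈ S.crit, ∃ C : ℝ, 1 ≤ C ∧
    ∀ (q : ℕ) (p : ℤ) (q' : ℕ) (p' : ℤ), BlGood S.rho q p q' → 0 < (q : ℝ) * S.rho - p →
      (q' : ℝ) * S.rho - p' < 0 → 0 < ((q : ℝ) * S.rho - p) + ((q' : ℝ) * S.rho - p') →
      blSt S.F q p c - c ≤ C * (c - blSt S.F q' p' c) := by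
  intro c hc
  obtain ⟨s, al, be, hs, hal, hbe, hpl⟩ := S.pl c hc
  obtain ⟨C1, hC1, hr1⟩ := S.r1_pos
  have hB := S.one_le_B
  obtain ⟨d, hd0, hd1, hd⟩ := exists_delta ((C1 + 1) ^ 2 * (S.B * (be / al))) s (by positivity) hs
  refine ⟨2 * C1 / d, ?_, ?_⟩
  · rw [le_div_iff₀ hd0]; linarith
  intro q p q' p' G hth hth' hsum
  have hq' : 0 < q' := lt_of_lt_of_le G.qpos G.qle
  have hlt1 : (q : ℝ) * S.rho - p < 1 := by have := G.thlt; rwa [abs_of_pos hth] at this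
  obtain ⟨v, hv⟩ := S.st_surj q p c
  obtain ⟨u, hu⟩ := S.st_surj q p v
  set st := blSt S.F q p with hst
  set g := blSt S.F q' p' with hg
  have huv : u < v := by rw [← hu]; exact S.lt_st hth u
  have hvc : v < c := by conv_rhs => rw [← hv]
                         exact S.lt_st hth v
  have hcs : c < st c := S.lt_st hth c
  set D := c - v with hD
  have hD0 : 0 < D := by linarith
  have hD1 : D < 1 := by
    have := S.st_lt_add_one hlt1 v
    rw [← hst, hv] at this; linarith
  set x := c - d * D with hx
  have hdD : d * D < D := by nlinarith
  have hdD0 : 0 < d * D := by positivity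
  have hvx : v < x := by linarith
  have hxc : x < c := by linarith
  have hgm : StrictMono g := S.st_mono q' p'
  -- cross ratio
  have hcr := cri_one G hth (k := q' - 1) (by omega) (S.mono huv) (S.mono hvx) (S.mono hxc) (by
    have e := st_iter_it (S := S) q p 4 1 u
    simp only [Function.iterate_one] at e
    rw [e]
    apply S.mono
    simp only [Function.iterate_succ_apply', Function.iterate_zero, id]
    rw [← hst, hu, hv]
    exact hcs.trans (S.lt_st hth _))
  have hgx : blX (g u) (g v) (g x) (g c) ≤ S.B * blX (S.F u) (S.F v) (S.F x) (S.F c) := by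
    have e : ∀ y, g y = S.F^[q' - 1] (S.F y) + (-p' : ℝ) := by
      intro y
      rw [hg]; unfold blSt
      rw [← Function.iterate_succ_apply, show (q' - 1).succ = q' by omega]; ring
    simp only [e]
    rw [blX_add]; exact hcr
  have hF := blX_le_right (S.mono huv) (S.mono hvx) (S.mono hxc)
  have hFle : (S.F c - S.F x) / (S.F c - S.F v) ≤ be / al * d ^ s := by
    have p1 := (hpl x (by rw [abs_le]; constructor <;> linarith)).2
    have p2 := (hpl v (by rw [abs_le]; constructor <;> linarith)).1
    have m1 := S.mono hxc
    have m2 := S.mono hvc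
    rw [abs_sub_comm, abs_of_pos (by linarith), abs_sub_comm, abs_of_pos (by linarith)] at p1 p2
    have e : c - x = d * D := by rw [hx]; ring
    rw [e, Real.mul_rpow hd0.le hD0.le] at p1
    rw [← hD] at p2
    have hDs : 0 < D ^ s := Real.rpow_pos_of_pos hD0 s
    rw [div_le_iff₀ (by linarith)]
    calc S.F c - S.F x ≤ be * (d ^ s * D ^ s) := p1
      _ = be / al * d ^ s * (al * D ^ s) := by field_simp
      _ ≤ _ := mul_le_mul_of_nonneg_left p2 (by positivity)
  have hX : blX (g u) (g v) (g x) (g c) ≤ S.B * (be / al * d ^ s) :=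
    hgx.trans (mul_le_mul_of_nonneg_left (hF.trans hFle) (by linarith))
  have k1 := hgm huv
  have k2 := hgm hvx
  have k3 := hgm hxc
  -- comparisons
  have egv : st (g u) = g v := by rw [hst, hg, S.st_st, ← hst, hu]
  have egc : st (g v) = g c := by rw [hst, hg, S.st_st, ← hst, hv]
  have r := (hr1 q p q' G hth (g u)).1
  rw [← hst, egv, egc] at r
  have r2 := (hr1 q p q' G hth u).2
  rw [← hst, hu, hv] at r2
  have r3 := (hr1 q p q' G hth v).1
  rw [← hst, hv] at r3
  have hugv : u < g v := by
    apply S.lt_of_h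
    rw [hg, h_st, ← hu, hst, h_st]; linarith
  have hgc : g c < c := S.st_lt hth' c
  have hgxx : g x < x := S.st_lt hth' x
  have hlen : g c - g v ≤ (C1 + 1) * D := by linarith
  have hlow : (g c - g x) / ((C1 + 1) * (g c - g v)) ≤ blX (g u) (g v) (g x) (g c) := by
    unfold blX
    rw [div_le_div_iff₀ (by nlinarith) (mul_pos (by linarith) (by linarith))]
    have : g x - g u ≤ (C1 + 1) * (g v - g u) := by linarith
    have h3 : 0 ≤ (g c - g x) * (g c - g v) := mul_nonneg (by linarith) (by linarith)
    have := mul_le_mul_of_nonneg_left this h3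
    linarith
  have h5 := hlow.trans hX
  rw [div_le_iff₀ (by nlinarith)] at h5
  have hpos : 0 ≤ S.B * (be / al * d ^ s) * (C1 + 1) := by positivity
  have h6 : g c - g x ≤ S.B * (be / al * d ^ s) * (C1 + 1) * ((C1 + 1) * D) := by
    refine h5.trans ?_
    rw [← mul_assoc]
    exact mul_le_mul_of_nonneg_left hlen hpos
  have h7 : (C1 + 1) ^ 2 * (S.B * (be / al)) * d ^ s * D ≤ d / 2 * D :=
    mul_le_mul_of_nonneg_right hd hD0.le
  have h8 : d * D / 2 ≤ c - g c := by
    have : S.B * (be / al * d ^ s) * (C1 + 1) * ((C1 + 1) * D) =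
      (C1 + 1) ^ 2 * (S.B * (be / al)) * d ^ s * D := by ring
    linarith
  rw [div_mul_eq_mul_div, le_div_iff₀ hd0]
  have h9 : (st c - c) * d ≤ C1 * D * d := mul_le_mul_of_nonneg_right r3 hd0.le
  have h10 : 2 * C1 * (d * D / 2) ≤ 2 * C1 * (c - g c) :=
    mul_le_mul_of_nonneg_left h8 (by linarith)
  linarith

end BlSys


namespace BlSys
variable {S : BlSys} {q q' : ℕ} {p p' : ℤ}

theorem pull_large (G : BlGood S.rho q p q') (hth : 0 < (q : ℝ) * S.rho - p)
    (hth' : (q' : ℝ) * S.rho - p' < 0)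
    (hsum : 0 < ((q : ℝ) * S.rho - p) + ((q' : ℝ) * S.rho - p'))
    {C1 : ℝ} (hC1 : 1 ≤ C1)
    (hr : ∀ y, blSt S.F q p y - y ≤ C1 * (blSt S.F q p (blSt S.F q p y) - blSt S.F q p y))
    (m : ℕ) {k : ℕ} (hk : k ≤ m * q') (x C : ℝ) (hC : 0 ≤ C)
    (hx : blSt S.F q p (S.F^[k] x) - S.F^[k] x ≤
      C * (S.F^[k] x - blSt S.F q' p' (S.F^[k] x))) :
    blSt S.F q p x - x ≤ S.B ^ m * ((1 + C) * (1 + C1)) * (x - blSt S.F q' p' x) := by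
  have hB := S.one_le_B
  have hs : ∀ x, x < blSt S.F q p x := S.lt_st hth
  have hg : ∀ x, blSt S.F q' p' x < x := S.st_lt hth'
  have hsg : x < blSt S.F q p (blSt S.F q' p' x) := by
    apply S.lt_of_h; rw [h_st, h_st]; linarith
  have hc := cri G hth m hk (hg x) (hs x) (hs (blSt S.F q p x)) (by
    simp only [Function.iterate_succ_apply', Function.iterate_zero, id]
    have h1 := S.st_mono q p (S.st_mono q p hsg)
    exact h1.trans (hs _))
  rw [← S.st_it, ← S.st_it, ← S.st_it, ← S.st_it] at hc
  set y := S.F^[k] x with hy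
  have a1 := hs y
  have a2 := hg y
  have a3 := hs (blSt S.F q p y)
  have a4 := hr y
  have b1 := hs x
  have b2 := hg x
  have b3 := hs (blSt S.F q p x)
  have hlow : 1 / ((1 + C) * (1 + C1)) ≤
      blX (blSt S.F q' p' y) y (blSt S.F q p y) (blSt S.F q p (blSt S.F q p y)) := by
    unfold blX
    rw [div_le_div_iff₀ (by positivity) (mul_pos (by linarith) (by linarith)), one_mul]
    have : (blSt S.F q p y - blSt S.F q' p' y) * (blSt S.F q p (blSt S.F q p y) - y) ≤
      ((1 + C) * (y - blSt S.F q' p' y)) *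
        ((1 + C1) * (blSt S.F q p (blSt S.F q p y) - blSt S.F q p y)) := by
      apply mul_le_mul
      · linarith
      · linarith
      · linarith
      · exact mul_nonneg (by linarith) (by linarith)
    linarith
  have hup := blX_le_left b2 b1 b3
  have h3 : 1 / ((1 + C) * (1 + C1)) ≤
      S.B ^ m * ((x - blSt S.F q' p' x) / (blSt S.F q p x - blSt S.F q' p' x)) :=
    (hlow.trans hc).trans (mul_le_mul_of_nonneg_left hup (by positivity))
  rw [← mul_div_assoc, div_le_div_iff₀ (by positivity) (by linarith), one_mul] at h3
  linarith

theorem between (hth : 0 < (q : ℝ) * S.rho - p) {C1 : ℝ}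
    (hr : ∀ y, blSt S.F q p y - y ≤ C1 * (blSt S.F q p (blSt S.F q p y) - blSt S.F q p y))
    {x w : ℝ} (h1 : x ≤ w) (h2 : w ≤ blSt S.F q p x) :
    blSt S.F q p x - x ≤ (1 + C1) * (blSt S.F q p w - w) := by
  obtain ⟨z, rfl⟩ := S.st_surj q p w
  have e1 : z ≤ x := (S.st_mono q p).le_iff_le.mp h2
  have e2 := (S.st_mono q p).monotone h1
  have := hr z
  linarith

theorem core_pos (S : BlSys) : ∃ C : ℝ, 1 ≤ C ∧
    ∀ (q : ℕ) (p : ℤ) (q' : ℕ) (p' : ℤ) (q'' : ℕ), BlGood S.rho q p q' →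
      BlGood S.rho q' p' q'' → 0 < (q : ℝ) * S.rho - p →
      (q' : ℝ) * S.rho - p' < 0 → 0 < ((q : ℝ) * S.rho - p) + ((q' : ℝ) * S.rho - p') →
      (∀ c0 w b : ℝ, ∀ c ∈ S.crit, ∀ (m : ℕ) (a : ℤ), m < q' →
        w ∈ uIcc c0 (blSt S.F q p c0) → w ∈ uIcc b (blSt S.F q' p' b) → S.F^[m] w = c + a →
        |blSt S.F q p c0 - c0| ≤
          C * |blSt S.F q' p' (blSt S.F q' p' b) - blSt S.F q' p' b|) ∧
      (∀ c0 ∈ S.crit, |blSt S.F q p c0 - c0| ≤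
        C * |blSt S.F q' p' (blSt S.F q' p' (blSt S.F q p c0)) -
          blSt S.F q' p' (blSt S.F q p c0)|) := by
  obtain ⟨C1, hC1, hr0⟩ := S.r1
  have hB := S.one_le_B
  have hcl := S.crit_large
  choose! Cc hCc hcl using hcl
  obtain ⟨K, hK⟩ : ∃ K, K = 1 + ∑ c ∈ S.crit, |Cc c| := ⟨_, rfl⟩
  have hK1 : 1 ≤ K := by
    have : 0 ≤ ∑ c ∈ S.crit, |Cc c| := Finset.sum_nonneg (fun _ _ => abs_nonneg _)
    linarith
  have hcK : ∀ c ∈ S.crit, Cc c ≤ K := by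
    intro c hc
    have := Finset.single_le_sum (f := fun c => |Cc c|) (fun _ _ => abs_nonneg _) hc
    have := le_abs_self (Cc c)
    linarith
  obtain ⟨CA, hCA⟩ : ∃ X, X = (1 + C1) * ((S.B ^ 1 * ((1 + K) * (1 + C1))) * (1 + C1)) := ⟨_, rfl⟩
  obtain ⟨CB, hCB⟩ : ∃ X, X = C1 * ((S.B ^ 1 * ((1 + (K + 1) * C1) * (1 + C1))) * C1) := ⟨_, rfl⟩
  have hCA0 : 0 ≤ CA := by rw [hCA]; positivity
  have hCB0 : 0 ≤ CB := by rw [hCB]; positivity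
  refine ⟨1 + CA + CB, by linarith, fun q p q' p' q'' G G' hth hth' hsum => ?_⟩
  set s := blSt S.F q p with hsd
  set g := blSt S.F q' p' with hgd
  have hs : ∀ x, x < s x := S.lt_st hth
  have hg : ∀ x, g x < x := S.st_lt hth'
  have smono : StrictMono s := S.st_mono q p
  have gmono : StrictMono g := S.st_mono q' p'
  have hr : ∀ y, s y - y ≤ C1 * (s (s y) - s y) := by
    intro y
    have := (hr0 q p q' G y).2
    rw [abs_of_pos (sub_pos.mpr (hs _)), abs_of_pos (sub_pos.mpr (hs _))] at this
    exact this
  have hrg : ∀ y, y - g y ≤ C1 * (g y - g (g y)) := by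
    intro y
    have := (hr0 q' p' q'' G' y).2
    rw [abs_of_neg (sub_neg.mpr (hg _)), abs_of_neg (sub_neg.mpr (hg _))] at this
    linarith
  have hlarge : ∀ c ∈ S.crit, ∀ a : ℤ, s (c + a) - (c + a) ≤ K * ((c + a) - g (c + a)) := by
    intro c hc a
    rw [hsd, hgd, st_add_int, st_add_int]
    have := hcl c hc q p q' p' G hth hth' hsum
    have h2 := mul_le_mul_of_nonneg_right (hcK c hc) (sub_nonneg.mpr (hg c).le)
    rw [← hsd, ← hgd] at *
    linarith
  constructor
  · intro c0 w b c hc m a hm hw hwb he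
    rw [uIcc_of_le (hs _).le] at hw
    rw [uIcc_of_ge (hg _).le] at hwb
    rw [abs_of_pos (sub_pos.mpr (hs _)), abs_of_neg (sub_neg.mpr (hg _))]
    have e1 : s c0 - c0 ≤ (1 + C1) * (s w - w) := between hth hr hw.1 hw.2
    have e2 : s w - w ≤ S.B ^ 1 * ((1 + K) * (1 + C1)) * (w - g w) := by
      apply pull_large G hth hth' hsum hC1 hr 1 (k := m) (by omega) w K (by linarith)
      rw [he]; exact hlarge c hc a
    have e3 : w - g w ≤ (1 + C1) * (g b - g (g b)) := by
      have := gmono.monotone hwb.1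
      have := hrg b
      linarith [hwb.2]
    have e4 : s c0 - c0 ≤ CA * (g b - g (g b)) := by
      rw [hCA]
      calc _ ≤ _ := e1
        _ ≤ (1 + C1) * (S.B ^ 1 * ((1 + K) * (1 + C1)) * ((1 + C1) * (g b - g (g b)))) := by
          gcongr
          exact e2.trans (by gcongr)
        _ = _ := by ring
    have := hg (g b)
    nlinarith
  · intro c0 hc0
    rw [abs_of_pos (sub_pos.mpr (hs _)), abs_of_neg (sub_neg.mpr (hg _))]
    have f1 := hlarge c0 hc0 0
    simp only [Int.cast_zero, add_zero] at f1
    have f2 : s (g c0) - g c0 ≤ ((K + 1) * C1) * (g c0 - g (g c0)) := by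
      have i1 := smono (hg c0)
      have i2 := hrg c0
      have : s (g c0) - g c0 ≤ (K + 1) * (c0 - g c0) := by linarith
      calc _ ≤ _ := this
        _ ≤ (K + 1) * (C1 * (g c0 - g (g c0))) := by gcongr
        _ = _ := by ring
    have hF : S.F^[q' - q] (s c0) = g c0 + ((p' - p : ℤ) : ℝ) := by
      rw [hsd, hgd]; unfold blSt
      rw [it_sub_int, ← Function.iterate_add_apply, Nat.sub_add_cancel G.qle]
      push_cast; ring
    have f3 : s (s c0) - s c0 ≤ S.B ^ 1 * ((1 + (K + 1) * C1) * (1 + C1)) * (s c0 - g (s c0)) := by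
      apply pull_large G hth hth' hsum hC1 hr 1 (k := q' - q) (by omega) _ _ (by positivity)
      rw [hF, st_add_int, st_add_int]
      rw [← hsd, ← hgd]; linarith
    have e4 : s c0 - c0 ≤ CB * (g (s c0) - g (g (s c0))) := by
      rw [hCB]
      calc _ ≤ _ := hr c0
        _ ≤ C1 * (S.B ^ 1 * ((1 + (K + 1) * C1) * (1 + C1)) *
            (C1 * (g (s c0) - g (g (s c0))))) := by
          gcongr
          exact f3.trans (by gcongr; exact hrg _)
        _ = _ := by ring
    have := hg (g (s c0))
    nlinarith

theorem core (S : BlSys) : ∃ C : ℝ, 1 ≤ C ∧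
    ∀ (q : ℕ) (p : ℤ) (q' : ℕ) (p' : ℤ) (q'' : ℕ), BlGood S.rho q p q' →
      BlGood S.rho q' p' q'' → ((q : ℝ) * S.rho - p) * ((q' : ℝ) * S.rho - p') < 0 →
      |(q' : ℝ) * S.rho - p'| < |(q : ℝ) * S.rho - p| →
      (∀ c0 w b : ℝ, ∀ c ∈ S.crit, ∀ (m : ℕ) (a : ℤ), m < q' →
        w ∈ uIcc c0 (blSt S.F q p c0) → w ∈ uIcc b (blSt S.F q' p' b) → S.F^[m] w = c + a →
        |blSt S.F q p c0 - c0| ≤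
          C * |blSt S.F q' p' (blSt S.F q' p' b) - blSt S.F q' p' b|) ∧
      (∀ c0 ∈ S.crit, |blSt S.F q p c0 - c0| ≤
        C * |blSt S.F q' p' (blSt S.F q' p' (blSt S.F q p c0)) -
          blSt S.F q' p' (blSt S.F q p c0)|) := by
  obtain ⟨C, hC, h⟩ := S.core_pos
  obtain ⟨C', hC', h'⟩ := S.refl.core_pos
  have aux : ∀ K, K ≤ max C C' → ∀ r t : ℝ, |r| ≤ K * |t| → |r| ≤ max C C' * |t| :=
    fun K hK r t hr => hr.trans (mul_le_mul_of_nonneg_right hK (abs_nonneg _))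
  refine ⟨max C C', le_max_of_le_left hC, fun q p q' p' q'' G G' hop hlt => ?_⟩
  rcases lt_or_gt_of_ne (abs_pos.mp G.thne) with hth | hth
  · have hth2 : 0 < (q' : ℝ) * S.rho - p' := by
      by_contra hcon
      nlinarith
    rw [abs_of_neg hth, abs_of_pos hth2] at hlt
    have hn : ∀ x y : ℝ, |-x - -y| = |x - y| := by
      intro x y; rw [← abs_neg]; congr 1; ring
    obtain ⟨hA, hB⟩ := h' q (-p) q' (-p') q'' (blGood_neg G) (blGood_neg G')
      (by simp only [refl]; push_cast; linarith) (by simp only [refl]; push_cast; linarith)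
      (by simp only [refl]; push_cast; linarith)
    constructor
    · intro c0 w b c hc m a hm hw hwb he
      apply aux C' (le_max_right _ _)
      have := hA (-c0) (-w) (-b) (-c) (Finset.mem_image_of_mem _ hc) m (-a) hm
      simp only [refl_st, neg_neg, hn] at this
      refine this ?_ ?_ ?_
      · rw [← Set.image_neg_uIcc]; exact mem_image_of_mem _ hw
      · rw [← Set.image_neg_uIcc]; exact mem_image_of_mem _ hwb
      · rw [refl_it, neg_neg, he]; push_cast; ring
    · intro c0 hc0
      apply aux C' (le_max_right _ _)
      have := hB (-c0) (Finset.mem_image_of_mem _ hc0)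
      simp only [refl_st, neg_neg, hn] at this
      exact this
  · have hth2 : (q' : ℝ) * S.rho - p' < 0 := by
      by_contra hcon
      nlinarith
    rw [abs_of_pos hth, abs_of_neg hth2] at hlt
    obtain ⟨hA, hB⟩ := h q p q' p' q'' G G' hth hth2 (by linarith)
    constructor
    · intro c0 w b c hc m a hm hw hwb he
      exact aux C (le_max_left _ _) _ _ (hA c0 w b c hc m a hm hw hwb he)
    · intro c0 hc0
      exact aux C (le_max_left _ _) _ _ (hB c0 hc0)

end BlSys


namespace BlCF
variable {ρ : ℝ}

theorem X_spec (hirr : Irrational ρ) (hmem : ρ ∈ Set.Ioo (0 : ℝ) 1) (n : ℕ) :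
    Irrational (gaussMap^[n] ρ) ∧ 0 < gaussMap^[n] ρ ∧ gaussMap^[n] ρ < 1 := by
  induction n with
  | zero => exact ⟨hirr, hmem.1, hmem.2⟩
  | succ n ih =>
    rw [Function.iterate_succ_apply']
    unfold gaussMap
    have h1 : Irrational (Int.fract (gaussMap^[n] ρ)⁻¹) := by
      have := ih.1.inv
      exact this.sub_intCast _
    refine ⟨h1, lt_of_le_of_ne (Int.fract_nonneg _) (fun h => ?_), Int.fract_lt_one _⟩
    exact h1.ne_zero h.symm

theorem digit_spec (hirr : Irrational ρ) (hmem : ρ ∈ Set.Ioo (0 : ℝ) 1) (n : ℕ) :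
    1 ≤ cfDigit ρ n ∧ (gaussMap^[n] ρ)⁻¹ = cfDigit ρ n + gaussMap^[n + 1] ρ := by
  obtain ⟨h1, h2, h3⟩ := X_spec hirr hmem n
  have h4 : 1 < (gaussMap^[n] ρ)⁻¹ := (one_lt_inv₀ h2).mpr h3
  have h5 : 1 ≤ ⌊(gaussMap^[n] ρ)⁻¹⌋ := by rw [Int.le_floor]; exact_mod_cast h4.le
  have h6 : ((cfDigit ρ n : ℕ) : ℤ) = ⌊(gaussMap^[n] ρ)⁻¹⌋ := by
    unfold cfDigit; exact Int.toNat_of_nonneg (by omega)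
  constructor
  · omega
  · have : ((cfDigit ρ n : ℕ) : ℝ) = ((⌊(gaussMap^[n] ρ)⁻¹⌋ : ℤ) : ℝ) := by exact_mod_cast h6
    rw [this, Function.iterate_succ_apply']
    unfold gaussMap
    exact (Int.floor_add_fract _).symm

def th (ρ : ℝ) (n : ℕ) : ℝ := (qDen ρ n : ℝ) * ρ - (((pNum ρ n : ℕ) : ℤ) : ℝ)

theorem th_rec (n : ℕ) : th ρ (n + 2) = cfDigit ρ (n + 1) * th ρ (n + 1) + th ρ n := by
  unfold th
  simp only [qDen, pNum]; push_cast; ring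

theorem th_succ (hirr : Irrational ρ) (hmem : ρ ∈ Set.Ioo (0 : ℝ) 1) (n : ℕ) :
    th ρ (n + 1) = - gaussMap^[n + 1] ρ * th ρ n := by
  induction n with
  | zero =>
    have := (digit_spec hirr hmem 0).2
    have h0 := hmem.1
    simp only [Function.iterate_zero, id] at this
    have e : gaussMap^[0 + 1] ρ = ρ⁻¹ - cfDigit ρ 0 := by rw [this]; ring
    rw [e]
    unfold th
    simp only [qDen, pNum]; push_cast
    field_simp
    ring
  | succ n ih =>
    have h := (digit_spec hirr hmem (n + 1)).2
    have h0 := (X_spec hirr hmem (n + 1)).2.1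
    have e : gaussMap^[n + 1 + 1] ρ = (gaussMap^[n + 1] ρ)⁻¹ - cfDigit ρ (n + 1) := by rw [h]; ring
    rw [th_rec, e]
    have : th ρ n = -(gaussMap^[n + 1] ρ)⁻¹ * th ρ (n + 1) := by
      rw [ih]; field_simp
    rw [this]; ring

theorem th_ne (hirr : Irrational ρ) (hmem : ρ ∈ Set.Ioo (0 : ℝ) 1) (n : ℕ) : th ρ n ≠ 0 := by
  induction n with
  | zero => simp [th, qDen, pNum]; exact hmem.1.ne'
  | succ n ih =>
    rw [th_succ hirr hmem]
    exact mul_ne_zero (neg_ne_zero.mpr (X_spec hirr hmem (n + 1)).2.1.ne') ih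

theorem th_op (hirr : Irrational ρ) (hmem : ρ ∈ Set.Ioo (0 : ℝ) 1) (n : ℕ) :
    th ρ n * th ρ (n + 1) < 0 := by
  rw [th_succ hirr hmem]
  have h1 := (X_spec hirr hmem (n + 1)).2.1
  have h2 : 0 < th ρ n ^ 2 := by have := th_ne hirr hmem n; positivity
  nlinarith

theorem th_lt (hirr : Irrational ρ) (hmem : ρ ∈ Set.Ioo (0 : ℝ) 1) (n : ℕ) :
    |th ρ (n + 1)| < |th ρ n| := by
  rw [th_succ hirr hmem, abs_mul, abs_neg]
  obtain ⟨_, h1, h2⟩ := X_spec hirr hmem (n + 1)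
  rw [abs_of_pos h1]
  have := abs_pos.mpr (th_ne hirr hmem n)
  nlinarith

theorem th_lt_one (hirr : Irrational ρ) (hmem : ρ ∈ Set.Ioo (0 : ℝ) 1) (n : ℕ) :
    |th ρ n| < 1 := by
  induction n with
  | zero => simp [th, qDen, pNum]; rw [abs_of_pos hmem.1]; exact hmem.2
  | succ n ih => exact (th_lt hirr hmem n).trans ih

theorem q_spec (hirr : Irrational ρ) (hmem : ρ ∈ Set.Ioo (0 : ℝ) 1) (n : ℕ) :
    0 < qDen ρ n ∧ qDen ρ n ≤ qDen ρ (n + 1) := by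
  induction n with
  | zero => simp only [qDen]; exact ⟨one_pos, (digit_spec hirr hmem 0).1⟩
  | succ n ih =>
    refine ⟨by omega, ?_⟩
    have := (digit_spec hirr hmem (n + 1)).1
    simp only [qDen]
    nlinarith [Nat.zero_le (qDen ρ (n + 1))]

theorem det (n : ℕ) :
    ((pNum ρ (n + 1) : ℤ) * qDen ρ n - pNum ρ n * qDen ρ (n + 1)) ^ 2 = 1 := by
  induction n with
  | zero => simp [qDen, pNum]
  | succ n ih =>
    rw [← ih]
    simp only [qDen, pNum]; push_cast; ring

theorem good (hirr : Irrational ρ) (hmem : ρ ∈ Set.Ioo (0 : ℝ) 1) (n : ℕ) :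
    BlGood ρ (qDen ρ n) (pNum ρ n : ℤ) (qDen ρ (n + 1)) := by
  obtain ⟨q0, q1⟩ := q_spec hirr hmem n
  have hop := th_op hirr hmem n
  have hlt := th_lt hirr hmem n
  have hn := th_ne hirr hmem n
  have hdet := det (ρ := ρ) n
  have hth : th ρ n = (qDen ρ n : ℝ) * ρ - (((pNum ρ n : ℕ) : ℤ) : ℝ) := rfl
  have hth' : th ρ (n + 1) = (qDen ρ (n + 1) : ℝ) * ρ - (((pNum ρ (n + 1) : ℕ) : ℤ) : ℝ) := rfl
  have hlt1 := th_lt_one hirr hmem n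
  generalize th ρ n = θ at *
  generalize th ρ (n + 1) = θ' at *
  generalize qDen ρ n = q at *
  generalize qDen ρ (n + 1) = q' at *
  generalize ((pNum ρ n : ℕ) : ℤ) = p at *
  generalize ((pNum ρ (n + 1) : ℕ) : ℤ) = p' at *
  refine ⟨q0, q1, ?_, ?_, ?_, ?_⟩
  · rw [← hth]; exact abs_pos.mpr hn
  · rw [← hth]; exact hlt1
  · intro d a hd hdq
    rw [← hth]
    obtain ⟨D, hD⟩ : ∃ D : ℤ, D = p' * q - p * q' := ⟨_, rfl⟩
    rw [← hD] at hdet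
    obtain ⟨U, hU⟩ : ∃ U : ℤ, U = (d * p' - a * q') * D := ⟨_, rfl⟩
    obtain ⟨V, hV⟩ : ∃ V : ℤ, V = (q * a - p * d) * D := ⟨_, rfl⟩
    have ed : (d : ℤ) = U * q + V * q' := by
      rw [hU, hV]
      have : (d * p' - a * q') * D * q + (q * a - p * d) * D * q' = d * (D * D) := by
        nth_rewrite 4 [hD]; ring
      rw [this, ← sq, hdet, mul_one]
    have ea : a = U * p + V * p' := by
      rw [hU, hV]
      have : (d * p' - a * q') * D * p + (q * a - p * d) * D * p' = a * (D * D) := by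
        nth_rewrite 4 [hD]; ring
      rw [this, ← sq, hdet, mul_one]
    have et : (d : ℝ) * ρ - a = U * θ + V * θ' := by
      have ed' : (d : ℝ) = U * q + V * q' := by exact_mod_cast ed
      have ea' : (a : ℝ) = U * p + V * p' := by exact_mod_cast ea
      rw [ed', ea', hth, hth']; ring
    rw [et]
    have q0' : (0 : ℤ) < q := by exact_mod_cast q0
    have q1' : (q : ℤ) ≤ q' := by exact_mod_cast q1
    have hd' : (0 : ℤ) < d := by exact_mod_cast hd
    have hdq' : (d : ℤ) < q' := by exact_mod_cast hdq
    have hap := abs_pos.mpr hn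
    rcases lt_trichotomy V 0 with hv | hv | hv
    · left
      have hu : 0 < U := by
        by_contra hcon
        nlinarith
      have hu' : (1 : ℝ) ≤ U := by exact_mod_cast hu
      have hv' : (V : ℝ) ≤ -1 := by exact_mod_cast (by omega : V ≤ -1)
      rcases lt_or_gt_of_ne hn with h | h
      · have h2 : 0 < θ' := by by_contra hcon; nlinarith
        rw [abs_of_neg h, abs_of_neg (by nlinarith)]
        nlinarith
      · have h2 : θ' < 0 := by by_contra hcon; nlinarith
        rw [abs_of_pos h, abs_of_pos (by nlinarith)]
        nlinarith
    · subst hv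
      simp only [zero_mul, add_zero, Int.cast_zero] at *
      have hu : 0 < U := by by_contra hcon; nlinarith
      rcases eq_or_lt_of_le (show 1 ≤ U from hu) with h | h
      · right
        rw [← h] at ed ea
        constructor
        · have : (d : ℤ) = q := by linarith
          exact_mod_cast this
        · linarith
      · left
        have hu' : (2 : ℝ) ≤ U := by exact_mod_cast h
        rw [abs_mul, abs_of_pos (by linarith : (0:ℝ) < U)]
        nlinarith
    · left
      have hu : U < 0 := by
        by_contra hcon
        nlinarith
      have hu' : (U : ℝ) ≤ -1 := by exact_mod_cast (by omega : U ≤ -1)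
      have hv' : (1 : ℝ) ≤ V := by exact_mod_cast hv
      rcases lt_or_gt_of_ne hn with h | h
      · have h2 : 0 < θ' := by by_contra hcon; nlinarith
        rw [abs_of_neg h, abs_of_pos (by nlinarith)]
        nlinarith
      · have h2 : θ' < 0 := by by_contra hcon; nlinarith
        rw [abs_of_pos h, abs_of_neg (by nlinarith)]
        nlinarith
  · intro t
    rw [← hth]
    obtain ⟨k, hk, hmin⟩ := Finset.exists_min_image (Finset.range (q + q' + 1))
      (fun k : ℕ => (k : ℝ) * ρ + ⌈t - k * ρ⌉) ⟨0, by simp⟩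
    have hmin' : ∀ (j : ℕ) (b : ℤ), j ≤ q + q' → t ≤ j * ρ + b →
        (k : ℝ) * ρ + ⌈t - k * ρ⌉ ≤ j * ρ + b := by
      intro j b hj hb
      refine (hmin j (Finset.mem_range.mpr (by omega))).trans ?_
      have : ⌈t - j * ρ⌉ ≤ b := Int.ceil_le.mpr (by linarith)
      have : ((⌈t - j * ρ⌉ : ℤ) : ℝ) ≤ b := by exact_mod_cast this
      linarith
    have hk' := Finset.mem_range.mp hk
    have hge := Int.le_ceil (t - k * ρ)
    generalize ⌈t - k * ρ⌉ = a at *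
    refine ⟨k, a, by omega, by linarith, ?_⟩
    by_contra hcon
    push Not at hcon
    rcases lt_or_gt_of_ne hn with h | h
    · have h2 : 0 < θ' := by by_contra hcon; nlinarith
      rw [abs_of_neg h] at hcon hlt
      rw [abs_of_pos h2] at hlt
      rcases le_or_gt (k + q) (q + q') with hc | hc
      · have := hmin' (k + q) (a - p) hc (by push_cast; linarith)
        push_cast at this
        linarith
      · have e : ((k - q' : ℕ) : ℝ) = k - q' := Nat.cast_sub (by omega)
        have := hmin' (k - q') (a + p') (by omega) (by rw [e]; push_cast; linarith)
        rw [e] at this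
        push_cast at this
        linarith
    · have h2 : θ' < 0 := by by_contra hcon; nlinarith
      rw [abs_of_pos h] at hcon hlt
      rw [abs_of_neg h2] at hlt
      rcases le_or_gt q k with hc | hc
      · have e : ((k - q : ℕ) : ℝ) = k - q := Nat.cast_sub hc
        have := hmin' (k - q) (a + p) (by omega) (by rw [e]; push_cast; linarith)
        rw [e] at this
        push_cast at this
        linarith
      · have := hmin' (k + q') (a - p') (by omega) (by push_cast; linarith)
        push_cast at this
        linarith

end BlCF


namespace BlSch
variable {F : ℝ → ℝ} {a b : ℝ}

theorem hasDeriv1 (hF : ContDiff ℝ 3 F) (x : ℝ) : HasDerivAt F (deriv F x) x :=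
  ((hF.differentiable (by norm_num)) x).hasDerivAt

theorem cd2 (hF : ContDiff ℝ 3 F) : ContDiff ℝ 2 (deriv F) := by
  have : ContDiff ℝ (2 + 1) F := hF
  exact (contDiff_succ_iff_deriv.mp this).2.2

theorem hasDeriv2 (hF : ContDiff ℝ 3 F) (x : ℝ) : HasDerivAt (deriv F) (deriv (deriv F) x) x :=
  (((cd2 hF).differentiable (by norm_num)) x).hasDerivAt

theorem cd1 (hF : ContDiff ℝ 3 F) : ContDiff ℝ 1 (deriv (deriv F)) := by
  have : ContDiff ℝ (1 + 1) (deriv F) := cd2 hF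
  exact (contDiff_succ_iff_deriv.mp this).2.2

theorem hasDeriv3 (hF : ContDiff ℝ 3 F) (x : ℝ) :
    HasDerivAt (deriv (deriv F)) (deriv (deriv (deriv F)) x) x :=
  (((cd1 hF).differentiable (by norm_num)) x).hasDerivAt

/-- `g = (F')^{-1/2}` -/
def gg (F : ℝ → ℝ) (x : ℝ) : ℝ := (Real.sqrt (deriv F x))⁻¹

def gg1 (F : ℝ → ℝ) (x : ℝ) : ℝ := -(deriv (deriv F) x) / 2 * gg F x ^ 3

theorem gg_pos {x : ℝ} (hx : 0 < deriv F x) : 0 < gg F x := inv_pos.mpr (Real.sqrt_pos.mpr hx)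

theorem gg_sq {x : ℝ} (hx : 0 < deriv F x) : gg F x ^ 2 = (deriv F x)⁻¹ := by
  unfold gg; rw [inv_pow, Real.sq_sqrt hx.le]

theorem hasDeriv_gg (hF : ContDiff ℝ 3 F) {x : ℝ} (hx : 0 < deriv F x) :
    HasDerivAt (gg F) (gg1 F x) x := by
  have h := ((hasDeriv2 hF x).sqrt hx.ne').inv (Real.sqrt_pos.mpr hx).ne'
  refine h.congr_deriv ?_
  unfold gg1 gg
  have := (Real.sqrt_pos.mpr hx).ne'
  field_simp

theorem gg1_deriv (hF : ContDiff ℝ 3 F) {x : ℝ} (hx : 0 < deriv F x) :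
    HasDerivAt (gg1 F) (-(1 / 2) * gg F x * schwarzianDeriv F x) x := by
  have h1 := ((hasDeriv3 hF x).neg.div_const 2).mul ((hasDeriv_gg hF hx).pow 3)
  have hs : deriv (fun y => deriv (deriv F) y / deriv F y) x =
      (deriv (deriv (deriv F)) x * deriv F x - deriv (deriv F) x * deriv (deriv F) x)
        / deriv F x ^ 2 := ((hasDeriv3 hF x).div (hasDeriv2 hF x) hx.ne').deriv
  unfold schwarzianDeriv
  rw [hs]
  refine h1.congr_deriv ?_
  have e := gg_sq hx
  have hg := gg_pos hx
  have e2 : gg F x ^ 3 = gg F x * (deriv F x)⁻¹ := by rw [← e]; ring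
  have e3 : gg F x ^ 5 = gg F x * (deriv F x)⁻¹ ^ 2 := by rw [← e]; ring
  unfold gg1
  simp only [Pi.neg_apply, Pi.pow_apply]
  have : -deriv (deriv (deriv F)) x / 2 * gg F x ^ 3 +
      -deriv (deriv F) x / 2 * (3 * gg F x ^ 2 * (-deriv (deriv F) x / 2 * gg F x ^ 3)) =
      -deriv (deriv (deriv F)) x / 2 * gg F x ^ 3 +
      3 / 4 * deriv (deriv F) x ^ 2 * gg F x ^ 5 := by ring
  trans (-deriv (deriv (deriv F)) x / 2 * gg F x ^ 3 +
      3 / 4 * deriv (deriv F) x ^ 2 * gg F x ^ 5)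
  · rw [← this]; push_cast; ring
  · rw [e2, e3]; field_simp; ring

section main

theorem gg1_mono (hF : ContDiff ℝ 3 F) (hpos : ∀ x ∈ Ioo a b, 0 < deriv F x)
    (hS : ∀ x ∈ Ioo a b, schwarzianDeriv F x < 0)
    : MonotoneOn (gg1 F) (Ioo a b) := by
  apply monotoneOn_of_deriv_nonneg (convex_Ioo a b)
  · exact fun x hx => (gg1_deriv hF (hpos x hx)).continuousAt.continuousWithinAt
  · rw [interior_Ioo]
    exact fun x hx => (gg1_deriv hF (hpos x hx)).differentiableAt.differentiableWithinAt
  · rw [interior_Ioo]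
    intro x hx
    rw [(gg1_deriv hF (hpos x hx)).deriv]
    have := gg_pos (hpos x hx)
    have := hS x hx
    nlinarith

theorem tangent (hF : ContDiff ℝ 3 F) (hpos : ∀ x ∈ Ioo a b, 0 < deriv F x)
    (hS : ∀ x ∈ Ioo a b, schwarzianDeriv F x < 0)
    {x y : ℝ} (hx : x ∈ Ioo a b) (hy : y ∈ Ioo a b) (hxy : x < y) :
    0 ≤ gg F x - gg F y + (y - x) * gg1 F y := by
  obtain ⟨z, hz, he⟩ := exists_hasDerivAt_eq_slope (gg F) (gg1 F) hxy
    (fun z hz => (hasDeriv_gg hF (hpos z ⟨hx.1.trans_le hz.1, hz.2.trans_lt hy.2⟩)).continuousAt.continuousWithinAt)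
    (fun z hz => hasDeriv_gg hF (hpos z ⟨hx.1.trans hz.1, hz.2.trans hy.2⟩))
  have := gg1_mono hF hpos hS ⟨hx.1.trans hz.1, hz.2.trans hy.2⟩ hy hz.2.le
  rw [eq_div_iff (by linarith)] at he
  nlinarith

theorem koebe_ineq (hF : ContDiff ℝ 3 F) (hpos : ∀ x ∈ Ioo a b, 0 < deriv F x)
    (hS : ∀ x ∈ Ioo a b, schwarzianDeriv F x < 0)
    {x y : ℝ} (hx : x ∈ Ioo a b) (hy : y ∈ Ioo a b) (hxy : x < y) :
    (y - x) * ((gg F x)⁻¹ * (gg F y)⁻¹) ≤ F y - F x := by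
  have hsub : ∀ z ∈ Icc x y, z ∈ Ioo a b := fun z hz => ⟨hx.1.trans_le hz.1, hz.2.trans_lt hy.2⟩
  have hd : ∀ z ∈ Icc x y, HasDerivAt (fun z => F z - (z - x) * ((gg F x)⁻¹ * (gg F z)⁻¹))
      (deriv F z - (1 * ((gg F x)⁻¹ * (gg F z)⁻¹) +
        (z - x) * ((gg F x)⁻¹ * (-gg1 F z / gg F z ^ 2)))) z := by
    intro z hz
    have hp := hpos z (hsub z hz)
    exact (hasDeriv1 hF z).sub (((hasDerivAt_id z).sub_const x).mul
      (((hasDeriv_gg hF hp).inv (gg_pos hp).ne').const_mul _))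
  have hm : MonotoneOn (fun z => F z - (z - x) * ((gg F x)⁻¹ * (gg F z)⁻¹)) (Icc x y) := by
    apply monotoneOn_of_deriv_nonneg (convex_Icc x y)
    · exact fun z hz => (hd z hz).continuousAt.continuousWithinAt
    · exact fun z hz => (hd z (interior_subset hz)).differentiableAt.differentiableWithinAt
    · rw [interior_Icc]
      intro z hz
      rw [(hd z ⟨hz.1.le, hz.2.le⟩).deriv]
      have ht := tangent hF hpos hS hx (hsub z ⟨hz.1.le, hz.2.le⟩) hz.1
      have g1 := gg_pos (hpos x hx)
      have hz' := hpos z (hsub z ⟨hz.1.le, hz.2.le⟩)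
      have g2 := gg_pos hz'
      have e : deriv F z = (gg F z ^ 2)⁻¹ := by rw [gg_sq hz', inv_inv]
      rw [e]
      have : (gg F z ^ 2)⁻¹ - (1 * ((gg F x)⁻¹ * (gg F z)⁻¹) +
        (z - x) * ((gg F x)⁻¹ * (-gg1 F z / gg F z ^ 2))) =
        (gg F x - gg F z + (z - x) * gg1 F z) / (gg F x * gg F z ^ 2) := by
        field_simp
        ring
      rw [this]
      positivity
  have := hm (left_mem_Icc.mpr hxy.le) (right_mem_Icc.mpr hxy.le) hxy.le
  simp only [sub_self, zero_mul, sub_zero] at this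
  linarith

theorem prod_ineq (hF : ContDiff ℝ 3 F) (hpos : ∀ x ∈ Ioo a b, 0 < deriv F x)
    (hS : ∀ x ∈ Ioo a b, schwarzianDeriv F x < 0)
    {x y : ℝ} (hx : x ∈ Ioo a b) (hy : y ∈ Ioo a b) (hxy : x < y) :
    deriv F y * deriv F x * (y - x) ^ 2 ≤ (F y - F x) ^ 2 := by
  have h := koebe_ineq hF hpos hS hx hy hxy
  have g1 := gg_pos (hpos x hx)
  have g2 := gg_pos (hpos y hy)
  have e1 : deriv F x = (gg F x ^ 2)⁻¹ := by rw [gg_sq (hpos x hx), inv_inv]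
  have e2 : deriv F y = (gg F y ^ 2)⁻¹ := by rw [gg_sq (hpos y hy), inv_inv]
  have h0 : 0 ≤ (y - x) * ((gg F x)⁻¹ * (gg F y)⁻¹) :=
    mul_nonneg (by linarith) (by positivity)
  have := pow_le_pow_left₀ h0 h 2
  rw [e1, e2]
  refine le_trans (le_of_eq ?_) this
  field_simp

theorem F_lt (hF : ContDiff ℝ 3 F) (hpos : ∀ x ∈ Ioo a b, 0 < deriv F x)
    (hS : ∀ x ∈ Ioo a b, schwarzianDeriv F x < 0)
    {x y : ℝ} (hx : x ∈ Ioo a b) (hy : y ∈ Ioo a b) (hxy : x < y) : F x < F y := by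
  have h := koebe_ineq hF hpos hS hx hy hxy
  have g1 := gg_pos (hpos x hx)
  have g2 := gg_pos (hpos y hy)
  have : 0 < (y - x) * ((gg F x)⁻¹ * (gg F y)⁻¹) := mul_pos (by linarith) (by positivity)
  linarith

theorem K_anti (hF : ContDiff ℝ 3 F) (hpos : ∀ x ∈ Ioo a b, 0 < deriv F x)
    (hS : ∀ x ∈ Ioo a b, schwarzianDeriv F x < 0)
    {u v y : ℝ} (hu : u ∈ Ioo a b) (hy : y ∈ Ioo a b) (huv : u < v) (hvy : v < y) :
    deriv F y / (F y - F v) - 1 / (y - v) ≤ deriv F y / (F y - F u) - 1 / (y - u) := by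
  have hsub : ∀ z ∈ Icc u v, z ∈ Ioo a b := fun z hz =>
    ⟨hu.1.trans_le hz.1, (hz.2.trans_lt hvy).trans hy.2⟩
  have hd : ∀ z ∈ Icc u v, HasDerivAt (fun z => deriv F y / (F y - F z) - 1 / (y - z))
      ((0 * (F y - F z) - deriv F y * (-deriv F z)) / (F y - F z) ^ 2 -
        (0 * (y - z) - 1 * (-1)) / (y - z) ^ 2) z := by
    intro z hz
    have h1 := F_lt hF hpos hS (hsub z hz) hy (hz.2.trans_lt hvy)
    have h2 : z < y := hz.2.trans_lt hvy
    exact ((hasDerivAt_const z _).div ((hasDeriv1 hF z).const_sub _) (by linarith)).sub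
      ((hasDerivAt_const z _).div ((hasDerivAt_id z).const_sub _) (sub_pos.mpr h2).ne')
  have hm : AntitoneOn (fun z => deriv F y / (F y - F z) - 1 / (y - z)) (Icc u v) := by
    apply antitoneOn_of_deriv_nonpos (convex_Icc u v)
    · exact fun z hz => (hd z hz).continuousAt.continuousWithinAt
    · exact fun z hz => (hd z (interior_subset hz)).differentiableAt.differentiableWithinAt
    · intro z hz
      have hz := interior_subset hz
      rw [(hd z hz).deriv]
      have h1 := F_lt hF hpos hS (hsub z hz) hy (hz.2.trans_lt hvy)
      have h2 : z < y := hz.2.trans_lt hvy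
      have h3 := prod_ineq hF hpos hS (hsub z hz) hy h2
      have h4 : 0 < F y - F z := by linarith
      have h5 : 0 < y - z := by linarith
      rw [sub_nonpos, div_le_div_iff₀ (by positivity) (by positivity)]
      linarith
  exact hm (left_mem_Icc.mpr huv.le) (right_mem_Icc.mpr huv.le) huv.le

theorem contract (hF : ContDiff ℝ 3 F) (hpos : ∀ x ∈ Ioo a b, 0 < deriv F x)
    (hS : ∀ x ∈ Ioo a b, schwarzianDeriv F x < 0)
    {u v w t : ℝ} (hu : a < u) (h1 : u < v) (h2 : v < w) (h3 : w < t) (ht : t < b) :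
    blX (F u) (F v) (F w) (F t) ≤ blX u v w t := by
  have mu : u ∈ Ioo a b := ⟨hu, by linarith⟩
  have mv : v ∈ Ioo a b := ⟨by linarith, by linarith⟩
  have mw : w ∈ Ioo a b := ⟨by linarith, by linarith⟩
  have mt : t ∈ Ioo a b := ⟨by linarith, by linarith⟩
  have hlt : ∀ {x y}, x ∈ Ioo a b → y ∈ Ioo a b → x < y → F x < F y :=
    fun hx hy hxy => F_lt hF hpos hS hx hy hxy
  have hsub : ∀ z ∈ Icc w t, z ∈ Ioo a b := fun z hz =>
    ⟨mw.1.trans_le hz.1, hz.2.trans_lt mt.2⟩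
  have hd : ∀ z ∈ Icc w t, HasDerivAt (fun z => Real.log (F z - F u) - Real.log (F z - F v) +
      (Real.log (z - v) - Real.log (z - u)))
      (deriv F z / (F z - F u) - deriv F z / (F z - F v) + (1 / (z - v) - 1 / (z - u))) z := by
    intro z hz
    have i1 := hlt mv (hsub z hz) (h2.trans_le hz.1)
    have i2 := hlt mu mv h1
    have := hz.1
    exact ((((hasDeriv1 hF z).sub_const _).log (by linarith)).sub
      (((hasDeriv1 hF z).sub_const _).log (by linarith))).add
      ((((hasDerivAt_id z).sub_const _).log (by simp only [id]; linarith)).sub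
        (((hasDerivAt_id z).sub_const _).log (by simp only [id]; linarith)))
  have hm : MonotoneOn (fun z => Real.log (F z - F u) - Real.log (F z - F v) +
      (Real.log (z - v) - Real.log (z - u))) (Icc w t) := by
    apply monotoneOn_of_deriv_nonneg (convex_Icc w t)
    · exact fun z hz => (hd z hz).continuousAt.continuousWithinAt
    · exact fun z hz => (hd z (interior_subset hz)).differentiableAt.differentiableWithinAt
    · intro z hz
      have hz := interior_subset hz
      rw [(hd z hz).deriv]
      have := K_anti hF hpos hS mu (hsub z hz) h1 (h2.trans_le hz.1)
      linarith
  have hL := hm (left_mem_Icc.mpr h3.le) (right_mem_Icc.mpr h3.le) h3.le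
  simp only at hL
  have a1 := hlt mu mv h1
  have a2 := hlt mv mw h2
  have a3 := hlt mw mt h3
  have p1 : 0 < F w - F u := by linarith
  have p2 : 0 < F w - F v := by linarith
  have p3 : 0 < F t - F u := by linarith
  have p4 : 0 < F t - F v := by linarith
  have r1 : 0 < w - u := by linarith
  have r2 : 0 < w - v := by linarith
  have r3 : 0 < t - u := by linarith
  have r4 : 0 < t - v := by linarith
  have hL2 : Real.log (((F w - F u) * (F t - F v)) * ((w - v) * (t - u))) ≤
      Real.log (((F t - F u) * (F w - F v)) * ((t - v) * (w - u))) := by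
    rw [Real.log_mul (by positivity) (by positivity), Real.log_mul p1.ne' p4.ne',
      Real.log_mul r2.ne' r3.ne', Real.log_mul (by positivity) (by positivity),
      Real.log_mul p3.ne' p2.ne', Real.log_mul r4.ne' r1.ne']
    linarith
  rw [Real.log_le_log_iff (by positivity) (by positivity)] at hL2
  unfold blX
  rw [div_le_div_iff₀ (by positivity) (by positivity)]
  have e1 : (F v - F u) * (F t - F w) =
    (F w - F u) * (F t - F v) - (F t - F u) * (F w - F v) := by ring
  have e2 : (v - u) * (t - w) = (w - u) * (t - v) - (t - u) * (w - v) := by ring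
  rw [e1, e2]
  nlinarith

end main
end BlSch


namespace BlMap

theorem unif (P : ℝ → ℝ → ℝ → Prop)
    (hmono : ∀ C C' a b, C ≤ C' → a < b → P C a b → P C' a b)
    (hper : ∀ C a b, ∀ n : ℤ, P C a b → P C (a + n) (b + n))
    (hloc : ∀ x : ℝ, ∃ n : ℤ, ∃ ε > 0, ∃ C, ∀ a b, a < b → x + n - ε < a → b < x + n + ε → P C a b) :
    ∃ ε > 0, ∃ C, 0 ≤ C ∧ ∀ a b, a < b → b - a < ε → P C a b := by
  have key : ∃ ε > 0, ∃ C, ∀ a b, a ∈ Icc (0 : ℝ) 1 → a < b → b - a < ε → P C a b := by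
    refine isCompact_Icc.induction_on
      (p := fun s : Set ℝ => ∃ ε > 0, ∃ C, ∀ a b, a ∈ s → a < b → b - a < ε → P C a b) ?_ ?_ ?_ ?_
    · exact ⟨1, one_pos, 0, fun a b h => absurd h (by simp)⟩
    · rintro s t hst ⟨ε, hε, C, h⟩
      exact ⟨ε, hε, C, fun a b ha => h a b (hst ha)⟩
    · rintro s t ⟨ε, hε, C, h⟩ ⟨ε', hε', C', h'⟩
      refine ⟨min ε ε', lt_min hε hε', max C C', ?_⟩
      rintro a b (ha | ha) hab hl
      · exact hmono _ _ _ _ (le_max_left _ _) hab (h a b ha hab (hl.trans_le (min_le_left _ _)))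
      · exact hmono _ _ _ _ (le_max_right _ _) hab (h' a b ha hab (hl.trans_le (min_le_right _ _)))
    · intro x _
      obtain ⟨n, ε, hε, C, h⟩ := hloc x
      refine ⟨Metric.ball x (ε / 2), mem_nhdsWithin_of_mem_nhds (Metric.ball_mem_nhds x (by positivity)),
        ε / 2, by positivity, C, fun a b ha hab hl => ?_⟩
      rw [Real.ball_eq_Ioo] at ha
      have := h (a + n) (b + n) (by linarith) (by linarith [ha.1]) (by linarith [ha.2])
      have := hper _ _ _ (-n) this
      push_cast at this
      simpa using this
  obtain ⟨ε, hε, C, h⟩ := key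
  refine ⟨ε, hε, max C 0, le_max_right _ _, fun a b hab hl => ?_⟩
  apply hmono _ _ _ _ (le_max_left C 0) hab
  have := h (Int.fract a) (b - ⌊a⌋) ⟨Int.fract_nonneg a, (Int.fract_lt_one a).le⟩
    (by unfold Int.fract; linarith) (by unfold Int.fract; linarith)
  have := hper _ _ _ ⌊a⌋ this
  rw [Int.fract_add_floor, sub_add_cancel] at this
  exact this

variable (f : MCM)

theorem cont : Continuous f.F := f.smooth.continuous
theorem dcont : Continuous (deriv f.F) := (BlSch.cd2 f.smooth).continuous

theorem map_add_int (x : ℝ) (a : ℤ) : f.F (x + a) = f.F x + a :=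
  (⟨⟨f.F, f.mono.monotone⟩, f.deg1⟩ : CircleDeg1Lift).map_add_int x a

theorem deriv_add_int (x : ℝ) (a : ℤ) : deriv f.F (x + a) = deriv f.F x := by
  have h1 := (BlSch.hasDeriv1 f.smooth (x + a)).comp_add_const x (a : ℝ)
  have h2 : HasDerivAt (fun x => f.F x + a) (deriv f.F x) x :=
    (BlSch.hasDeriv1 f.smooth x).add_const _
  have e : (fun x => f.F (x + a)) = (fun x => f.F x + a) := funext fun x => map_add_int f x a
  rw [e] at h1
  exact h1.unique h2

theorem deriv_nonneg (x : ℝ) : 0 ≤ deriv f.F x := f.mono.monotone.deriv_nonneg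

theorem mvt {a b : ℝ} (hab : a < b) : ∃ x ∈ Ioo a b, f.F b - f.F a = deriv f.F x * (b - a) := by
  obtain ⟨x, hx, he⟩ := exists_hasDerivAt_eq_slope f.F (deriv f.F) hab (cont f).continuousOn
    (fun z _ => BlSch.hasDeriv1 f.smooth z)
  refine ⟨x, hx, ?_⟩
  rw [he, div_mul_cancel₀]; linarith

/-- reverse Hoelder type property on an interval -/
def RH (C a b : ℝ) : Prop := ∀ x ∈ Icc a b, deriv f.F x * (b - a) ≤ C * (f.F b - f.F a)

theorem crit_ball (i : Fin f.N) : ∃ ε > 0, ∀ x, |x - f.c i| < ε → x ∈ f.W i := by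
  obtain ⟨ε, hε, h⟩ := Metric.isOpen_iff.mp (f.W_open i) _ (f.c_mem_W i)
  exact ⟨ε, hε, fun x hx => h (by rw [Metric.mem_ball, Real.dist_eq]; exact hx)⟩

theorem RH_crit (i : Fin f.N) : ∃ ε > 0, ∃ C, 0 ≤ C ∧
    ∀ a b, a < b → f.c i - ε < a → b < f.c i + ε → RH f C a b := by
  obtain ⟨ε, hε, hW⟩ := crit_ball f i
  have hal := f.al_pos i
  have hbe : 0 < f.be i := hal.trans (f.al_lt_be i)
  have hs := f.s_gt_one i
  have pw := f.powerLaw i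
  have hc0 := f.isCrit i
  generalize f.c i = c at *
  generalize f.s i = s at *
  generalize f.al i = al at *
  generalize f.be i = be at *
  obtain ⟨T, hT⟩ : ∃ T : ℝ, T = 2 ^ (s - 1) := ⟨_, rfl⟩
  have hT0 : 0 < T := by rw [hT]; positivity
  refine ⟨ε, hε, 4 * T * be / al, by positivity, fun a b hab ha hb x hx => ?_⟩
  obtain ⟨r, hr⟩ : ∃ r, r = max (c - a) (b - c) := ⟨_, rfl⟩
  have hra : c - a ≤ r := by rw [hr]; exact le_max_left _ _
  have hrb : b - c ≤ r := by rw [hr]; exact le_max_right _ _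
  have hr0 : 0 < r := by linarith
  have hrε : r < ε := by rw [hr]; exact max_lt (by linarith) (by linarith)
  -- upper bound for the derivative
  have hup : deriv f.F x ≤ be * r ^ (s - 1) := by
    by_cases hxc : x = c
    · rw [hxc, hc0]; positivity
    · have h1 : |x - c| ≤ r := by rw [abs_le]; constructor <;> linarith [hx.1, hx.2]
      refine ((pw x (hW x (h1.trans_lt hrε)) hxc).2.le).trans ?_
      have := Real.rpow_le_rpow (abs_nonneg _) h1 (by linarith : 0 ≤ s - 1)
      gcongr
  -- good subinterval
  obtain ⟨a', b', h1, h2, h3, h4, h5⟩ : ∃ a' b', a ≤ a' ∧ b' ≤ b ∧ a' < b' ∧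
      (b - a) / 4 ≤ b' - a' ∧ ∀ y ∈ Ioo a' b', r / 2 ≤ |y - c| := by
    rcases le_total (c - a) (b - c) with hle | hle
    · have hrr : r = b - c := by rw [hr, max_eq_right hle]
      refine ⟨b - (b - a) / 4, b, by linarith, le_rfl, by linarith, by linarith, fun y hy => ?_⟩
      refine le_trans ?_ (le_abs_self _)
      have := hy.1
      linarith
    · have hrr : r = c - a := by rw [hr, max_eq_left hle]
      refine ⟨a, a + (b - a) / 4, le_rfl, by linarith, by linarith, by linarith, fun y hy => ?_⟩
      rw [abs_sub_comm]
      refine le_trans ?_ (le_abs_self _)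
      have := hy.2
      linarith
  obtain ⟨y, hy, he⟩ := mvt f h3
  have hyc : r / 2 ≤ |y - c| := h5 y hy
  have hyne : y ≠ c := by
    rintro rfl; simp at hyc; linarith
  have hyr : |y - c| ≤ r := by
    rw [abs_le]; constructor <;> linarith [hy.1, hy.2]
  have hlow : al * (r ^ (s - 1) / T) ≤ deriv f.F y := by
    refine le_trans ?_ (pw y (hW y (hyr.trans_lt hrε)) hyne).1.le
    rw [hT, ← Real.div_rpow hr0.le (by norm_num)]
    have := Real.rpow_le_rpow (by positivity) hyc (by linarith : 0 ≤ s - 1)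
    gcongr
  have hR : 0 < r ^ (s - 1) := Real.rpow_pos_of_pos hr0 _
  have hFF : al * (r ^ (s - 1) / T) * ((b - a) / 4) ≤ f.F b - f.F a := by
    have i1 := f.mono.monotone h1
    have i2 := f.mono.monotone h2
    have : al * (r ^ (s - 1) / T) * ((b - a) / 4) ≤ deriv f.F y * (b' - a') := by
      apply mul_le_mul hlow h4 (by linarith) (deriv_nonneg f y)
    linarith
  calc deriv f.F x * (b - a) ≤ be * r ^ (s - 1) * (b - a) := by
        apply mul_le_mul_of_nonneg_right hup; linarith
    _ = 4 * T * be / al * (al * (r ^ (s - 1) / T) * ((b - a) / 4)) := by field_simp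
    _ ≤ _ := by gcongr

theorem local_pos (p : ℝ) (hp : 0 < deriv f.F p) : ∃ ε > 0, ∀ x, |x - p| < ε →
    deriv f.F p / 2 ≤ deriv f.F x ∧ deriv f.F x ≤ 2 * deriv f.F p := by
  have h := Metric.continuousAt_iff.mp ((dcont f).continuousAt (x := p)) (deriv f.F p / 2) (by positivity)
  obtain ⟨ε, hε, h⟩ := h
  refine ⟨ε, hε, fun x hx => ?_⟩
  have := h (show dist x p < ε by rw [Real.dist_eq]; exact hx)
  rw [Real.dist_eq, abs_lt] at this
  constructor <;> linarith

theorem RH_local (p : ℝ) : ∃ n : ℤ, ∃ ε > 0, ∃ C,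
    ∀ a b, a < b → p + n - ε < a → b < p + n + ε → RH f C a b := by
  rcases (deriv_nonneg f p).eq_or_lt with h0 | h0
  · obtain ⟨i, k, rfl⟩ := f.critOnly p h0.symm
    obtain ⟨ε, hε, C, _, h⟩ := RH_crit f i
    refine ⟨-k, ε, hε, C, ?_⟩
    push_cast
    simpa using h
  · obtain ⟨ε, hε, h⟩ := local_pos f p h0
    refine ⟨0, ε, hε, 4, fun a b hab ha hb x hx => ?_⟩
    simp only [Int.cast_zero, add_zero] at ha hb
    obtain ⟨y, hy, he⟩ := mvt f hab
    rw [he]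
    have h1 := (h x (by rw [abs_lt]; constructor <;> linarith [hx.1, hx.2])).2
    have h2 := (h y (by rw [abs_lt]; constructor <;> linarith [hy.1, hy.2])).1
    nlinarith

theorem RH_mono {C C' a b : ℝ} (h : C ≤ C') (hab : a < b) (hR : RH f C a b) : RH f C' a b := by
  intro x hx
  have := f.mono hab
  exact (hR x hx).trans (mul_le_mul_of_nonneg_right h (by linarith))

theorem deriv_bdd : ∃ M, 0 ≤ M ∧ ∀ x, deriv f.F x ≤ M := by
  obtain ⟨M, hM⟩ := isCompact_Icc.exists_bound_of_continuousOn (s := Icc (0:ℝ) 1) (dcont f).continuousOn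
  refine ⟨max M 0, le_max_right _ _, fun x => ?_⟩
  have := hM (Int.fract x) ⟨Int.fract_nonneg x, (Int.fract_lt_one x).le⟩
  have e := deriv_add_int f (Int.fract x) ⌊x⌋
  rw [Int.fract_add_floor] at e
  rw [e]
  exact (le_abs_self _).trans (this.trans (le_max_left _ _))

theorem incr_bdd (δ : ℝ) (hδ : 0 < δ) : ∃ η > 0, ∀ x, η ≤ f.F (x + δ) - f.F x := by
  have hc : Continuous (fun x => f.F (x + δ) - f.F x) :=
    ((cont f).comp (continuous_id.add continuous_const)).sub (cont f)
  obtain ⟨z, _, hz⟩ := isCompact_Icc.exists_isMinOn (nonempty_Icc.mpr (zero_le_one (α := ℝ))) hc.continuousOn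
  refine ⟨f.F (z + δ) - f.F z, by have := f.mono (show z < z + δ by linarith); linarith, fun x => ?_⟩
  have h1 : f.F (z + δ) - f.F z ≤ f.F (Int.fract x + δ) - f.F (Int.fract x) :=
    hz (show Int.fract x ∈ Icc (0:ℝ) 1 from ⟨Int.fract_nonneg x, (Int.fract_lt_one x).le⟩)
  have h2 := map_add_int f (Int.fract x) ⌊x⌋
  have h3 := map_add_int f (Int.fract x + δ) ⌊x⌋
  have e : Int.fract x + δ + ⌊x⌋ = x + δ := by unfold Int.fract; ring
  rw [Int.fract_add_floor] at h2
  rw [e] at h3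
  linarith

theorem RH_global : ∃ C, 1 ≤ C ∧ ∀ a b, a < b → b - a ≤ 4 → RH f C a b := by
  obtain ⟨ε, hε, C, hC, h⟩ := unif (RH f) (fun C C' a b h hab => RH_mono f h hab)
    (by
      intro C a b n h x hx
      have := h (x - n) ⟨by linarith [hx.1], by linarith [hx.2]⟩
      have e := deriv_add_int f (x - n) n
      rw [sub_add_cancel] at e
      rw [e, map_add_int, map_add_int]
      have e2 : b + n - (a + n) = b - a := by ring
      rw [e2]; linarith)
    (RH_local f)
  obtain ⟨M, hM, hMb⟩ := deriv_bdd f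
  obtain ⟨η, hη, hηb⟩ := incr_bdd f ε hε
  refine ⟨1 + C + 4 * M / η, by have : 0 ≤ 4 * M / η := by positivity
                                linarith, fun a b hab h4 => ?_⟩
  have hp : 0 ≤ 4 * M / η := by positivity
  rcases lt_or_ge (b - a) ε with hlt | hge
  · exact RH_mono f (by linarith) hab (h a b hab hlt)
  · apply RH_mono f (show 4 * M / η ≤ _ by linarith) hab
    intro x _
    have h1 := hηb a
    have h2 := f.mono.monotone (show a + ε ≤ b by linarith)
    calc deriv f.F x * (b - a) ≤ M * 4 := mul_le_mul (hMb x) h4 (by linarith) hM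
      _ = 4 * M / η * η := by field_simp
      _ ≤ _ := by gcongr; linarith

theorem blX_of_RH {C u v w t : ℝ} (hC : 0 ≤ C) (h1 : u < v) (h2 : v < w) (h3 : w < t)
    (hl : RH f C u w) (hr : RH f C v t) :
    blX (f.F u) (f.F v) (f.F w) (f.F t) ≤ C ^ 2 * blX u v w t := by
  obtain ⟨x, hx, ex⟩ := mvt f h1
  obtain ⟨y, hy, ey⟩ := mvt f h3
  have a1 := hl x ⟨hx.1.le, hx.2.le.trans h2.le⟩
  have a2 := hr y ⟨h2.le.trans hy.1.le, hy.2.le⟩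
  have m1 := f.mono h1
  have m2 := f.mono h2
  have m3 := f.mono h3
  unfold blX
  rw [← mul_div_assoc, div_le_div_iff₀ (mul_pos (by linarith) (by linarith))
    (mul_pos (by linarith) (by linarith))]
  rw [ex, ey]
  have d1 := deriv_nonneg f x
  have d2 := deriv_nonneg f y
  have : (deriv f.F x * (w - u)) * (deriv f.F y * (t - v)) ≤
      (C * (f.F w - f.F u)) * (C * (f.F t - f.F v)) := by
    apply mul_le_mul a1 a2
    · exact mul_nonneg d2 (by linarith)
    · exact mul_nonneg hC (by linarith)
  have h := mul_le_mul_of_nonneg_left this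
    (mul_nonneg (show 0 ≤ v - u by linarith) (show 0 ≤ t - w by linarith))
  linarith

def Dst (crit : Finset ℝ) (C a b : ℝ) : Prop := ∀ v w, a < v → v < w → w < b →
  blX (f.F a) (f.F v) (f.F w) (f.F b) ≤ Real.exp (C * ((b - a) + blInd crit a b)) * blX a v w b

theorem blInd_nonneg (crit : Finset ℝ) (a b : ℝ) : 0 ≤ blInd crit a b := by
  unfold blInd; split_ifs <;> norm_num

theorem Dst_of {crit : Finset ℝ} {K C a b : ℝ}
    (h : ∀ v w, a < v → v < w → w < b →
      blX (f.F a) (f.F v) (f.F w) (f.F b) ≤ K * blX a v w b)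
    (hK : K ≤ Real.exp (C * ((b - a) + blInd crit a b))) : Dst f crit C a b := by
  intro v w h1 h2 h3
  exact (h v w h1 h2 h3).trans (mul_le_mul_of_nonneg_right hK (blX_pos h1 h2 h3).le)

def crit : Finset ℝ := Finset.univ.image f.c

theorem Dst_local (p : ℝ) : ∃ n : ℤ, ∃ ε > 0, ∃ C,
    ∀ a b, a < b → p + n - ε < a → b < p + n + ε → Dst f (crit f) C a b := by
  rcases (deriv_nonneg f p).eq_or_lt with h0 | h0
  · obtain ⟨i, k, rfl⟩ := f.critOnly p h0.symm
    obtain ⟨ε, hε, C, hC, h⟩ := RH_crit f i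
    obtain ⟨ε', hε', hW⟩ := crit_ball f i
    refine ⟨-k, min ε ε', lt_min hε hε', C ^ 2, fun a b hab ha hb => ?_⟩
    push_cast at ha hb
    have m1 := min_le_left ε ε'
    have m2 := min_le_right ε ε'
    by_cases hc : f.c i ∈ Icc a b
    · have hI : blInd (crit f) a b = 1 := by
        unfold blInd
        rw [if_pos]
        exact ⟨f.c i, Finset.mem_image_of_mem _ (Finset.mem_univ i), 0, by simpa using hc⟩
      apply Dst_of f (K := C ^ 2)
      · intro v w h1 h2 h3
        apply blX_of_RH f hC h1 h2 h3
        · exact h _ _ (by linarith) (by linarith) (by linarith)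
        · exact h _ _ (by linarith) (by linarith) (by linarith)
      · rw [hI]
        have e1 := Real.add_one_le_exp (C ^ 2 * (b - a + 1))
        have : 0 ≤ C ^ 2 * (b - a) := mul_nonneg (sq_nonneg _) (by linarith)
        linarith
    · apply Dst_of f (K := 1)
      · intro v w h1 h2 h3
        rw [one_mul]
        have hWp : ∀ x, x ∈ f.W i → x ≠ f.c i → 0 < deriv f.F x := by
          intro x hx hxc
          refine lt_trans ?_ (f.powerLaw i x hx hxc).1
          exact mul_pos (f.al_pos i) (Real.rpow_pos_of_pos (abs_pos.mpr (sub_ne_zero.mpr hxc)) _)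
        rcases lt_or_ge (f.c i) a with hca | hca
        · have hin : ∀ x ∈ Ioo (f.c i) (f.c i + ε'), x ∈ f.W i ∧ x ≠ f.c i := fun x hx =>
            ⟨hW x (by rw [abs_lt]; constructor <;> linarith [hx.1, hx.2]), hx.1.ne'⟩
          apply BlSch.contract f.smooth (a := f.c i) (b := f.c i + ε')
            (fun x hx => hWp x (hin x hx).1 (hin x hx).2)
            (fun x hx => f.negSchwarzian i x (hin x hx).1 (hin x hx).2) hca h1 h2 h3
          linarith
        · have hcb : b < f.c i := by
            by_contra hcon
            exact hc ⟨hca, not_lt.mp hcon⟩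
          have hin : ∀ x ∈ Ioo (f.c i - ε') (f.c i), x ∈ f.W i ∧ x ≠ f.c i := fun x hx =>
            ⟨hW x (by rw [abs_lt]; constructor <;> linarith [hx.1, hx.2]), hx.2.ne⟩
          apply BlSch.contract f.smooth (a := f.c i - ε') (b := f.c i)
            (fun x hx => hWp x (hin x hx).1 (hin x hx).2)
            (fun x hx => f.negSchwarzian i x (hin x hx).1 (hin x hx).2) _ h1 h2 h3 hcb
          linarith
      · apply Real.one_le_exp
        have := blInd_nonneg (crit f) a b
        exact mul_nonneg (sq_nonneg _) (by linarith)
  · obtain ⟨ε, hε, h⟩ := local_pos f p h0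
    have hc2 : ContinuousOn (deriv (deriv f.F)) (Icc (p - ε) (p + ε)) :=
      (BlSch.cd1 f.smooth).continuous.continuousOn
    obtain ⟨L, hL⟩ := isCompact_Icc.exists_bound_of_continuousOn hc2
    have hL0 : 0 ≤ L := (norm_nonneg _).trans (hL p ⟨by linarith, by linarith⟩)
    obtain ⟨m, hm⟩ : ∃ m, m = deriv f.F p / 2 := ⟨_, rfl⟩
    have hm0 : 0 < m := by rw [hm]; positivity
    refine ⟨0, ε, hε, 2 * (L / m), fun a b hab ha hb => ?_⟩
    simp only [Int.cast_zero, add_zero] at ha hb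
    have hlow : ∀ x ∈ Icc a b, m ≤ deriv f.F x := by
      intro x hx
      rw [hm]
      exact (h x (by rw [abs_lt]; constructor <;> linarith [hx.1, hx.2])).1
    have hlip : ∀ x ∈ Icc a b, ∀ y ∈ Icc a b, deriv f.F x ≤ deriv f.F y + L * (b - a) := by
      intro x hx y hy
      have := Convex.norm_image_sub_le_of_norm_deriv_le (f := deriv f.F) (s := Icc a b) (C := L)
        (fun z _ => (BlSch.hasDeriv2 f.smooth z).differentiableAt)
        (fun z hz => hL z ⟨by linarith [hz.1], by linarith [hz.2]⟩) (convex_Icc a b) hy hx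
      have h1 : ‖x - y‖ ≤ b - a := by
        rw [Real.norm_eq_abs, abs_le]; constructor <;> linarith [hx.1, hx.2, hy.1, hy.2]
      have h2 := le_abs_self (deriv f.F x - deriv f.F y)
      rw [Real.norm_eq_abs] at this
      have h3 := mul_le_mul_of_nonneg_left h1 hL0
      linarith
    obtain ⟨E, hE⟩ : ∃ E, E = Real.exp (L / m * (b - a)) := ⟨_, rfl⟩
    have hE0 : 0 < E := by rw [hE]; positivity
    have hcmp : ∀ x ∈ Icc a b, ∀ y ∈ Icc a b, deriv f.F x ≤ E * deriv f.F y := by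
      intro x hx y hy
      have h1 := hlip x hx y hy
      have h2 := hlow y hy
      have h3 : L / m * (b - a) + 1 ≤ E := by rw [hE]; exact Real.add_one_le_exp _
      have h4 : L * (b - a) ≤ L / m * (b - a) * deriv f.F y := by
        have : L * (b - a) = L / m * (b - a) * m := by field_simp
        rw [this]
        apply mul_le_mul_of_nonneg_left h2
        exact mul_nonneg (by positivity) (by linarith)
      nlinarith
    have hRH : ∀ a' b', a ≤ a' → a' < b' → b' ≤ b → ∀ x ∈ Icc a b,
        deriv f.F x * (b' - a') ≤ E * (f.F b' - f.F a') := by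
      intro a' b' i1 i2 i3 x hx
      obtain ⟨y, hy, e⟩ := mvt f i2
      rw [e]
      have := hcmp x hx y ⟨by linarith [hy.1], by linarith [hy.2]⟩
      nlinarith
    apply Dst_of f (K := E ^ 2)
    · intro v w h1 h2 h3
      apply blX_of_RH f hE0.le h1 h2 h3
      · intro x hx
        exact hRH _ _ le_rfl (by linarith) h3.le x ⟨hx.1, hx.2.trans h3.le⟩
      · intro x hx
        exact hRH _ _ h1.le (by linarith) le_rfl x ⟨h1.le.trans hx.1, hx.2⟩
    · rw [hE, ← Real.exp_nat_mul]
      apply Real.exp_le_exp.mpr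
      have := blInd_nonneg (crit f) a b
      have h2 : 0 ≤ L / m * blInd (crit f) a b := mul_nonneg (by positivity) this
      push_cast
      linarith

theorem blInd_add (crit : Finset ℝ) (a b : ℝ) (n : ℤ) :
    blInd crit (a + n) (b + n) = blInd crit a b := by
  have : (∃ c ∈ crit, ∃ k : ℤ, a + n ≤ c + k ∧ c + k ≤ b + n) ↔
      (∃ c ∈ crit, ∃ k : ℤ, a ≤ c + k ∧ c + k ≤ b) := by
    constructor
    · rintro ⟨c, hc, k, h1, h2⟩
      exact ⟨c, hc, k - n, by push_cast; linarith, by push_cast; linarith⟩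
    · rintro ⟨c, hc, k, h1, h2⟩
      exact ⟨c, hc, k + n, by push_cast; linarith, by push_cast; linarith⟩
  unfold blInd
  by_cases h : (∃ c ∈ crit, ∃ k : ℤ, a ≤ c + k ∧ c + k ≤ b)
  · rw [if_pos h, if_pos (this.mpr h)]
  · rw [if_neg h, if_neg (fun h2 => h (this.mp h2))]

theorem one : ∃ C0, 0 ≤ C0 ∧ ∀ u v w t, u < v → v < w → w < t → t - u ≤ 4 →
    blX (f.F u) (f.F v) (f.F w) (f.F t) ≤
      Real.exp (C0 * ((t - u) + blInd (crit f) u t)) * blX u v w t := by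
  obtain ⟨C, hC, hR⟩ := RH_global f
  obtain ⟨ε, hε, C', hC', h⟩ := unif (Dst f (crit f))
    (by
      intro C C' a b hCC hab h
      have := blInd_nonneg (crit f) a b
      intro v w h1 h2 h3
      refine (h v w h1 h2 h3).trans (mul_le_mul_of_nonneg_right ?_ (blX_pos h1 h2 h3).le)
      apply Real.exp_le_exp.mpr
      exact mul_le_mul_of_nonneg_right hCC (by linarith))
    (by
      intro C a b n h v w h1 h2 h3
      have := h (v - n) (w - n) (by linarith) (by linarith) (by linarith)
      have e1 := map_add_int f (v - n) n
      have e2 := map_add_int f (w - n) n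
      rw [sub_add_cancel] at e1 e2
      rw [map_add_int, map_add_int, e1, e2, blX_add, blInd_add]
      have e3 : b + n - (a + n) = b - a := by ring
      have e4 := blX_add a (v - n) (w - n) b n
      rw [sub_add_cancel, sub_add_cancel] at e4
      rw [e3, e4]
      exact this)
    (Dst_local f)
  refine ⟨C' + C ^ 2 / ε, by positivity, fun u v w t h1 h2 h3 h4 => ?_⟩
  have hI := blInd_nonneg (crit f) u t
  have hX := (blX_pos h1 h2 h3).le
  rcases lt_or_ge (t - u) ε with hlt | hge
  · refine (h u t (by linarith) hlt v w h1 h2 h3).trans (mul_le_mul_of_nonneg_right ?_ hX)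
    apply Real.exp_le_exp.mpr
    apply mul_le_mul_of_nonneg_right _ (by linarith)
    have : 0 ≤ C ^ 2 / ε := by positivity
    linarith
  · refine (blX_of_RH f (by linarith) h1 h2 h3 (hR u w (by linarith) (by linarith))
      (hR v t (by linarith) (by linarith))).trans (mul_le_mul_of_nonneg_right ?_ hX)
    have e := Real.add_one_le_exp ((C' + C ^ 2 / ε) * (t - u + blInd (crit f) u t))
    have h5 : C ^ 2 ≤ C ^ 2 / ε * (t - u) := by
      rw [div_mul_eq_mul_div, le_div_iff₀ hε]
      exact mul_le_mul_of_nonneg_left hge (by positivity)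
    have h6 : 0 ≤ C' * (t - u + blInd (crit f) u t) := mul_nonneg hC' (by linarith)
    have h7 : 0 ≤ C ^ 2 / ε * blInd (crit f) u t := mul_nonneg (by positivity) hI
    linarith

end BlMap


namespace BlMap
variable (f : MCM)

theorem pl (i : Fin f.N) : ∃ s al be : ℝ, 1 < s ∧ 0 < al ∧ 0 < be ∧ ∀ x, |x - f.c i| ≤ 1 →
    al * |x - f.c i| ^ s ≤ |f.F x - f.F (f.c i)| ∧
      |f.F x - f.F (f.c i)| ≤ be * |x - f.c i| ^ s := by
  obtain ⟨ε, hε, hW⟩ := crit_ball f i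
  obtain ⟨C, hC, hR⟩ := RH_global f
  have hal := f.al_pos i
  have hbe : 0 < f.be i := hal.trans (f.al_lt_be i)
  have hs := f.s_gt_one i
  have pw := f.powerLaw i
  generalize f.c i = c at *
  generalize f.s i = s at *
  generalize f.al i = al at *
  generalize f.be i = be at *
  obtain ⟨M, hM, hMb⟩ := deriv_bdd f
  obtain ⟨η, hη, hηb⟩ := incr_bdd f ε hε
  have hεs : 0 < ε ^ s := Real.rpow_pos_of_pos hε s
  refine ⟨s, min (al / C) η, be + M / ε ^ s, hs, lt_min (by positivity) hη, by positivity,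
    fun x hx => ?_⟩
  rcases eq_or_ne x c with rfl | hne
  · simp only [sub_self, abs_zero]
    rw [Real.zero_rpow (by linarith)]; simp
  have hr0 : 0 < |x - c| := abs_pos.mpr (sub_ne_zero.mpr hne)
  obtain ⟨r, hr⟩ : ∃ r, r = |x - c| := ⟨_, rfl⟩
  -- increments
  have hinc : ∃ y, y ≠ c ∧ |y - c| ≤ r ∧ |f.F x - f.F c| = deriv f.F y * r := by
    rcases lt_or_gt_of_ne hne with h | h
    · obtain ⟨y, hy, e⟩ := mvt f h
      have e1 : r = c - x := by rw [hr, abs_of_neg (by linarith)]; ring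
      refine ⟨y, hy.2.ne, ?_, ?_⟩
      · rw [abs_le]; constructor <;> linarith [hy.1, hy.2]
      · rw [abs_sub_comm, e, e1]
        exact abs_of_nonneg (mul_nonneg (deriv_nonneg f y) (by linarith))
    · obtain ⟨y, hy, e⟩ := mvt f h
      have e1 : r = x - c := by rw [hr, abs_of_pos (by linarith)]
      refine ⟨y, hy.1.ne', ?_, ?_⟩
      · rw [abs_le]; constructor <;> linarith [hy.1, hy.2]
      · rw [e, e1]
        exact abs_of_nonneg (mul_nonneg (deriv_nonneg f y) (by linarith))
  have hRx : deriv f.F x * r ≤ C * |f.F x - f.F c| := by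
    rcases lt_or_gt_of_ne hne with h | h
    · have e1 : r = c - x := by rw [hr, abs_of_neg (by linarith)]; ring
      have := hR x c h (by rw [← e1, hr]; linarith) x ⟨le_rfl, h.le⟩
      rw [e1, abs_sub_comm, abs_of_pos (by have := f.mono h; linarith)]; exact this
    · have e1 : r = x - c := by rw [hr, abs_of_pos (by linarith)]
      have := hR c x h (by rw [← e1, hr]; linarith) x ⟨h.le, le_rfl⟩
      rw [e1, abs_of_pos (by have := f.mono h; linarith)]; exact this
  have hlow2 : ε ≤ r → η ≤ |f.F x - f.F c| := by
    intro hle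
    rcases lt_or_gt_of_ne hne with h | h
    · have e1 : r = c - x := by rw [hr, abs_of_neg (by linarith)]; ring
      rw [abs_sub_comm, abs_of_pos (by have := f.mono h; linarith)]
      have := hηb x
      have := f.mono.monotone (show x + ε ≤ c by linarith)
      linarith
    · have e1 : r = x - c := by rw [hr, abs_of_pos (by linarith)]
      rw [abs_of_pos (by have := f.mono h; linarith)]
      have := hηb c
      have := f.mono.monotone (show c + ε ≤ x by linarith)
      linarith
  rw [← hr] at hr0 hx ⊢
  have hrs : 0 < r ^ s := Real.rpow_pos_of_pos hr0 s
  have hrs1 : r ^ s ≤ 1 := Real.rpow_le_one hr0.le hx (by linarith)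
  have hrr : r ^ (s - 1) * r = r ^ s := by
    rw [← Real.rpow_add_one hr0.ne', sub_add_cancel]
  obtain ⟨y, hyc, hyr, hye⟩ := hinc
  rcases lt_or_ge r ε with hlt | hge
  · constructor
    · have h1 := (pw x (hW x (by rw [← hr]; exact hlt)) hne).1.le
      rw [← hr] at h1
      have h2 : al * r ^ s ≤ C * |f.F x - f.F c| := by
        refine le_trans ?_ hRx
        rw [← hrr, ← mul_assoc]
        exact mul_le_mul_of_nonneg_right h1 hr0.le
      calc min (al / C) η * r ^ s ≤ al / C * r ^ s :=
            mul_le_mul_of_nonneg_right (min_le_left _ _) hrs.le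
        _ = (al * r ^ s) / C := by ring
        _ ≤ _ := by rw [div_le_iff₀ (by linarith)]; linarith
    · have h1 := (pw y (hW y (hyr.trans_lt hlt)) hyc).2.le
      have h2 := Real.rpow_le_rpow (abs_nonneg _) hyr (by linarith : 0 ≤ s - 1)
      rw [hye]
      have h3 : deriv f.F y ≤ be * r ^ (s - 1) := h1.trans (by gcongr)
      have h4 : 0 ≤ M / ε ^ s * r ^ s := by positivity
      calc deriv f.F y * r ≤ be * r ^ (s - 1) * r := mul_le_mul_of_nonneg_right h3 hr0.le
        _ = be * r ^ s := by rw [← hrr]; ring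
        _ ≤ _ := by linarith
  · constructor
    · calc min (al / C) η * r ^ s ≤ η * 1 := by
            apply mul_le_mul (min_le_right _ _) hrs1 hrs.le hη.le
        _ ≤ _ := by rw [mul_one]; exact hlow2 hge
    · rw [hye]
      have h1 : ε ^ s ≤ r ^ s := Real.rpow_le_rpow hε.le hge (by linarith)
      have h2 : M ≤ M / ε ^ s * r ^ s := by
        rw [div_mul_eq_mul_div, le_div_iff₀ hεs]
        exact mul_le_mul_of_nonneg_left h1 hM
      have h3 : 0 ≤ be * r ^ s := by positivity
      calc deriv f.F y * r ≤ M * 1 := mul_le_mul (hMb y) hx hr0.le hM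
        _ ≤ _ := by linarith

theorem exists_semiconj (ρ : ℝ) (hrot : HasRotationNumber f.F ρ) :
    ∃ h : ℝ → ℝ, Monotone h ∧ (∀ x, h (x + 1) = h x + 1) ∧ ∀ x, h (f.F x) = h x + ρ := by
  let G : CircleDeg1Lift := ⟨⟨f.F, f.mono.monotone⟩, f.deg1⟩
  let T : CircleDeg1Lift := ⟨⟨fun x => x + ρ, fun x y h => by simpa using h⟩, fun x => by ring⟩
  have hT : Function.Bijective T := by
    constructor
    · intro x y h
      exact add_right_cancel (show x + ρ = y + ρ from h)
    · intro y; exact ⟨y - ρ, show y - ρ + ρ = y by ring⟩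
  have hG : Function.Bijective G :=
    ⟨f.mono.injective, (cont f).surjective G.tendsto_atTop G.tendsto_atBot⟩
  have tT : CircleDeg1Lift.translationNumber T = ρ := by
    apply CircleDeg1Lift.translationNumber_eq_of_tendsto₀
    have e : ∀ n : ℕ, T^[n + 1] 0 / ((n : ℝ) + 1) = ρ := by
      intro n
      have : ∀ m : ℕ, T^[m] 0 = m * ρ := by
        intro m
        induction m with
        | zero => simp
        | succ m ih =>
          rw [Function.iterate_succ_apply', ih]
          show m * ρ + ρ = _
          push_cast; ring
      rw [this]; push_cast; field_simp
    rw [← tendsto_add_atTop_iff_nat 1]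
    push_cast
    simp only [e]
    exact tendsto_const_nhds
  have tG : CircleDeg1Lift.translationNumber G = ρ :=
    CircleDeg1Lift.translationNumber_eq_of_tendsto₀ G hrot
  obtain ⟨H, hH⟩ := CircleDeg1Lift.semiconj_of_bijective_of_translationNumber_eq hG hT (tG.trans tT.symm)
  exact ⟨H, H.monotone, H.map_add_one, fun x => hH x⟩

theorem exists_sys (ρ : ℝ) (hrot : HasRotationNumber f.F ρ) :
    ∃ S : BlSys, S.F = f.F ∧ S.rho = ρ ∧ S.crit = crit f := by
  obtain ⟨h, h1, h2, h3⟩ := exists_semiconj f ρ hrot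
  obtain ⟨C0, hC0, hone⟩ := one f
  refine ⟨{ F := f.F, h := h, rho := ρ, cont := cont f, mono := f.mono, deg := f.deg1,
            hmono := h1, hdeg := h2, hF := h3, crit := crit f, C0 := C0, C0_nonneg := hC0,
            one := hone, pl := ?_ }, rfl, rfl, rfl⟩
  intro c hc
  obtain ⟨i, _, rfl⟩ := Finset.mem_image.mp hc
  exact pl f i

end BlMap


namespace BlSys

theorem h_iter (S : BlSys) (q : ℕ) (p : ℤ) (k : ℕ) (x : ℝ) :
    S.h ((blSt S.F q p)^[k] x) = S.h x + k * (q * S.rho - p) := by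
  induction k with
  | zero => simp
  | succ k ih => rw [Function.iterate_succ_apply', h_st, ih]; push_cast; ring

theorem tele (S : BlSys) {q q' : ℕ} {p p' : ℤ} {a : ℕ}
    (hop : ((q : ℝ) * S.rho - p) * ((q' : ℝ) * S.rho - p') < 0)
    (hpos : 0 < ((q : ℝ) * S.rho - p) *
      (((q : ℝ) * S.rho - p) + a * ((q' : ℝ) * S.rho - p'))) (c0 : ℝ) :
    (∀ k ≤ a, (blSt S.F q' p')^[k] (blSt S.F q p c0) ∈ uIcc c0 (blSt S.F q p c0)) ∧
    ∑ k ∈ Finset.range a, |(blSt S.F q' p')^[k + 1] (blSt S.F q p c0) -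
      (blSt S.F q' p')^[k] (blSt S.F q p c0)| ≤ |blSt S.F q p c0 - c0| := by
  set s := blSt S.F q p with hs
  set g := blSt S.F q' p' with hg
  have hne : (q : ℝ) * S.rho - p ≠ 0 := by
    intro h; rw [h] at hop; simp at hop
  rcases lt_or_gt_of_ne hne with h | h
  · have h' : 0 < (q' : ℝ) * S.rho - p' := by by_contra hc; nlinarith
    have ha : ((q : ℝ) * S.rho - p) + a * ((q' : ℝ) * S.rho - p') < 0 := by
      by_contra hc; nlinarith
    have hup : ∀ x, x < g x := S.lt_st h'
    have hz0 : s c0 < c0 := S.st_lt h c0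
    have hmon : Monotone (fun k => g^[k] (s c0)) := by
      apply monotone_nat_of_le_succ
      intro k
      simp only [Function.iterate_succ_apply']
      exact (hup _).le
    have hza : g^[a] (s c0) < c0 := by
      apply S.lt_of_h
      rw [hg, h_iter, hs, h_st]; linarith
    constructor
    · intro k hk
      rw [uIcc_of_ge hz0.le]
      exact ⟨hmon (Nat.zero_le k), (hmon hk).trans hza.le⟩
    · have e : ∀ k, |g^[k + 1] (s c0) - g^[k] (s c0)| = g^[k + 1] (s c0) - g^[k] (s c0) := by
        intro k
        apply abs_of_nonneg
        have := hmon (Nat.le_succ k)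
        simp only at this
        exact sub_nonneg.mpr this
      rw [Finset.sum_congr rfl (fun k _ => e k), Finset.sum_range_sub (fun k => g^[k] (s c0)),
        abs_of_neg (by linarith)]
      simp only [Function.iterate_zero, id]
      linarith
  · have h' : (q' : ℝ) * S.rho - p' < 0 := by by_contra hc; nlinarith
    have ha : 0 < ((q : ℝ) * S.rho - p) + a * ((q' : ℝ) * S.rho - p') := by
      by_contra hc; nlinarith
    have hup : ∀ x, g x < x := S.st_lt h'
    have hz0 : c0 < s c0 := S.lt_st h c0
    have hmon : Antitone (fun k => g^[k] (s c0)) := by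
      apply antitone_nat_of_succ_le
      intro k
      simp only [Function.iterate_succ_apply']
      exact (hup _).le
    have hza : c0 < g^[a] (s c0) := by
      apply S.lt_of_h
      rw [hg, h_iter, hs, h_st]; linarith
    constructor
    · intro k hk
      rw [uIcc_of_le hz0.le]
      exact ⟨hza.le.trans (hmon hk), hmon (Nat.zero_le k)⟩
    · have e : ∀ k, |g^[k + 1] (s c0) - g^[k] (s c0)| = g^[k] (s c0) - g^[k + 1] (s c0) := by
        intro k
        have := hmon (Nat.le_succ k)
        simp only at this
        rw [abs_of_nonpos (sub_nonpos.mpr this)]; ring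
      rw [Finset.sum_congr rfl (fun k _ => e k), Finset.sum_range_sub' (fun k => g^[k] (s c0)),
        abs_of_pos (by linarith)]
      simp only [Function.iterate_zero, id]
      linarith

theorem it_eq (S : BlSys) (q q' : ℕ) (p p' : ℤ) (k : ℕ) (x : ℝ) :
    S.F^[q + k * q'] x =
      (blSt S.F q' p')^[k] (blSt S.F q p x) + ((p + k * p' : ℤ) : ℝ) := by
  rw [st_iter]
  unfold blSt
  rw [it_sub_int, ← Function.iterate_add_apply, add_comm q]
  push_cast; ring

end BlSys

theorem bl_deriv_iter (f : MCM) (m : ℕ) (x : ℝ) (h : deriv (f.F^[m]) x = 0) :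
    ∃ k < m, deriv f.F (f.F^[k] x) = 0 := by
  have hd : ∀ m : ℕ, HasDerivAt (f.F^[m]) (∏ k ∈ Finset.range m, deriv f.F (f.F^[k] x)) x := by
    intro m
    induction m with
    | zero => simpa using hasDerivAt_id x
    | succ m ih =>
      rw [Function.iterate_succ', Finset.prod_range_succ, mul_comm]
      exact (BlSch.hasDeriv1 f.smooth _).comp x ih
  rw [(hd m).deriv, Finset.prod_eq_zero_iff] at h
  obtain ⟨k, hk, h⟩ := h
  exact ⟨k, Finset.mem_range.mp hk, h⟩

theorem bridges_are_large
    (f : MCM) (ρ : ℝ) (hirr : Irrational ρ) (hmem : ρ ∈ Set.Ioo (0 : ℝ) 1)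
    (hrot : HasRotationNumber f.F ρ) (i₀ : Fin f.N) :
    ∃ K : ℝ, 1 < K ∧ ∀ n i j : ℕ, IsBridgePair f ρ i₀ n i j → i + 1 < j →
      K⁻¹ * atomLen f.F ρ (f.c i₀) n 0 ≤ bridgeLen f ρ i₀ n (i + 1) j ∧
        bridgeLen f ρ i₀ n (i + 1) j ≤ K * atomLen f.F ρ (f.c i₀) n 0 := by
  obtain ⟨S, hSF, hSr, hSc⟩ := BlMap.exists_sys f ρ hrot
  obtain ⟨C, hC, hcore⟩ := S.core
  refine ⟨C + 1, by linarith, fun n i j hb hij => ?_⟩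
  have hop := BlCF.th_op hirr hmem n
  have hop2 := BlCF.th_op hirr hmem (n + 1)
  have hrec := BlCF.th_rec (ρ := ρ) n
  have hlt := BlCF.th_lt hirr hmem n
  have G := BlCF.good hirr hmem n
  have G' := BlCF.good hirr hmem (n + 1)
  have hpp : 0 < BlCF.th ρ n * (BlCF.th ρ n + cfDigit ρ (n + 1) * BlCF.th ρ (n + 1)) := by
    have e : BlCF.th ρ n + cfDigit ρ (n + 1) * BlCF.th ρ (n + 1) = BlCF.th ρ (n + 2) := by
      rw [hrec]; ring
    rw [e]
    rcases lt_or_gt_of_ne (BlCF.th_ne hirr hmem n) with h | h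
    · have h1 : 0 < BlCF.th ρ (n + 1) := by by_contra hc; nlinarith
      have h2 : BlCF.th ρ (n + 2) < 0 := by
        by_contra hc
        have : 0 ≤ BlCF.th ρ (n + 1) * BlCF.th ρ (n + 1 + 1) := mul_nonneg h1.le (not_lt.mp hc)
        linarith
      exact mul_pos_of_neg_of_neg h h2
    · have h1 : BlCF.th ρ (n + 1) < 0 := by by_contra hc; nlinarith
      have h2 : 0 < BlCF.th ρ (n + 2) := by
        by_contra hc
        have : 0 ≤ BlCF.th ρ (n + 1) * BlCF.th ρ (n + 1 + 1) :=
          mul_nonneg_of_nonpos_of_nonpos h1.le (not_lt.mp hc)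
        linarith
      exact mul_pos h h2
  unfold BlCF.th at hop hlt hpp
  obtain ⟨hbi, hij', hno, hbj⟩ := hb
  have hja : j ≤ cfDigit ρ (n + 1) := by
    rcases hbj with h | h
    · exact h.1.le
    · exact h.le
  obtain ⟨q, hq⟩ : ∃ q, q = qDen ρ n := ⟨_, rfl⟩
  obtain ⟨q', hq'⟩ : ∃ q, q = qDen ρ (n + 1) := ⟨_, rfl⟩
  obtain ⟨p, hp⟩ : ∃ p : ℤ, p = ((pNum ρ n : ℕ) : ℤ) := ⟨_, rfl⟩
  obtain ⟨p', hp'⟩ : ∃ p : ℤ, p = ((pNum ρ (n + 1) : ℕ) : ℤ) := ⟨_, rfl⟩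
  obtain ⟨a, ha⟩ : ∃ a, a = cfDigit ρ (n + 1) := ⟨_, rfl⟩
  rw [← hq, ← hq', ← hp, ← hp'] at hop hlt
  rw [← hq, ← hq', ← hp, ← hp', ← ha] at hpp
  rw [← hq, ← hq', ← hp] at G
  rw [← hq', ← hp'] at G'
  rw [← hSr] at hop hlt hpp G G'
  obtain ⟨hA, hB⟩ := hcore q p q' p' _ G G' hop hlt
  have hc0 : f.c i₀ ∈ S.crit := by
    rw [hSc]; exact Finset.mem_image_of_mem _ (Finset.mem_univ _)
  obtain ⟨hz, hsum⟩ := S.tele hop hpp (f.c i₀)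
  have hit := S.it_eq q q' p p'
  set c0 := f.c i₀ with hc0d
  have hpr : ((pNum ρ n : ℕ) : ℝ) = (p : ℝ) := by rw [hp]; simp
  have hpr' : ((pNum ρ (n + 1) : ℕ) : ℝ) = (p' : ℝ) := by rw [hp']; simp
  have hIn : atomLen f.F ρ c0 n 0 = |blSt S.F q p c0 - c0| := by
    unfold atomLen blSt
    rw [← hSF, zero_add, hpr, ← hq]; simp
  set s := blSt S.F q p with hs
  set g := blSt S.F q' p' with hg
  have hnext : ∀ k, S.F^[q + k * q' + q'] c0 - p' =
      g^[k + 1] (s c0) + ((p + k * p' : ℤ) : ℝ) := by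
    intro k
    have e : q + k * q' + q' = q + (k + 1) * q' := by ring
    rw [e, hit (k + 1)]; push_cast; ring
  have hAt : ∀ k, atomLen f.F ρ c0 (n + 1) (qDen ρ n + k * qDen ρ (n + 1)) =
      |g^[k + 1] (s c0) - g^[k] (s c0)| := by
    intro k
    unfold atomLen
    rw [← hSF, ← hq, ← hq', hpr', hnext, hit k, add_sub_add_right_eq_sub]
  have hlow : |s c0 - c0| ≤ C * |g^[i + 1 + 1] (s c0) - g^[i + 1] (s c0)| := by
    rw [Function.iterate_succ_apply' g (i + 1), Function.iterate_succ_apply' g i]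
    rcases hbi with hcr | h0
    · obtain ⟨hia, x, hx, hdx⟩ := hcr
      obtain ⟨m, hm, hdm⟩ := bl_deriv_iter f _ x hdx
      obtain ⟨jj, kk, hjk⟩ := f.critOnly _ hdm
      unfold atomSet at hx
      rw [← hSF, ← hq, ← hq', hpr', hnext, hit i] at hx
      obtain ⟨P, hP⟩ : ∃ P : ℤ, P = p + i * p' := ⟨_, rfl⟩
      rw [← hP] at hx
      have hw : x - P ∈ uIcc (g^[i] (s c0)) (g^[i + 1] (s c0)) := by
        rw [mem_uIcc] at hx ⊢
        rcases hx with h | h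
        · left; constructor <;> linarith [h.1, h.2]
        · right; constructor <;> linarith [h.1, h.2]
      apply hA c0 (x - P) (g^[i] (s c0)) (f.c jj)
        (by rw [hSc]; exact Finset.mem_image_of_mem _ (Finset.mem_univ _)) m (kk - P)
        (by rw [hq']; exact hm)
      · exact uIcc_subset_uIcc (hz i (by omega)) (hz (i + 1) (by omega)) hw
      · rw [Function.iterate_succ_apply'] at hw; exact hw
      · rw [S.it_sub_int, hSF, hjk]; push_cast; ring
    · subst h0
      simpa using hB c0 hc0
  have hbl : bridgeLen f ρ i₀ n (i + 1) j =
      ∑ k ∈ Finset.Ico (i + 1) j, |g^[k + 1] (s c0) - g^[k] (s c0)| := by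
    unfold bridgeLen
    exact Finset.sum_congr rfl (fun k _ => hAt k)
  rw [hbl, hIn]
  constructor
  · have h1 : |g^[i + 1 + 1] (s c0) - g^[i + 1] (s c0)| ≤
        ∑ k ∈ Finset.Ico (i + 1) j, |g^[k + 1] (s c0) - g^[k] (s c0)| :=
      Finset.single_le_sum (f := fun k => |g^[k + 1] (s c0) - g^[k] (s c0)|)
        (fun _ _ => abs_nonneg _) (Finset.mem_Ico.mpr ⟨le_rfl, hij⟩)
    have h0 := abs_nonneg (g^[i + 1 + 1] (s c0) - g^[i + 1] (s c0))
    rw [inv_mul_le_iff₀ (by linarith)]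
    nlinarith
  · have h1 : ∑ k ∈ Finset.Ico (i + 1) j, |g^[k + 1] (s c0) - g^[k] (s c0)| ≤
        ∑ k ∈ Finset.range a, |g^[k + 1] (s c0) - g^[k] (s c0)| := by
      apply Finset.sum_le_sum_of_subset_of_nonneg
      · intro k hk
        rw [Finset.mem_Ico] at hk
        rw [Finset.mem_range]; omega
      · intro _ _ _; exact abs_nonneg _
    have h0 := abs_nonneg (s c0 - c0)
    nlinarith
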